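/- arXiv:1010.0512 — 3 statements merged into one kernel-verified Lean document; each statement's English description precedes it below -/
import Mathlib

section
/- Let T be a triangle in ℝ² with vertices in the lattice ℤ², and let r ∈ ℤ², r ≠ 0. Define χ_T(x) := lim_{ρ→0} |T ∩ B_ρ(x)| / |B_ρ(x)| (which exists for every x). Then the sum over all i ∈ ℤ² of the bond average ⨍_{(i,i+r)} χ_T db equals the area |T|, where ⨍_{(i,i+r)} f db := ∫₀¹ f((1-λ)i + λ(i+r)) dλ. -/
/-!
The triangle and its reflection in the midpoint of one side fill a parallelogram, which is a
fundamental domain, up to a null set, of the lattice `M` spanned by its sides. Hence `T` and `-T`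
together cover almost every point the same number `k` of times modulo the lattice `L ⊇ M`, and
integrating over a fundamental domain `D` of `L` gives `k |D| = 2 |T|`.

Averaging over balls turns this almost everywhere statement into one about every point: with
`F y := ∑ v ∈ L, χ (v + y)`, letting the radius tend to zero gives `F y + F (-y) = k` for all `y`.
The sum of the bond averages is `∫₀¹ F (l • r) dl`. Reversing the bonds by `l ↦ 1 - l`, the
`L`-periodicity of `F` shows that it also equals `∫₀¹ F (-(l • r)) dl`, so it is `k / 2`, which is
`|T| / |D|`.
-/

open MeasureTheory Filter

/-- Embedding of the lattice `ℤ²` into `ℝ²`. -/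
noncomputable def c2 (i : ℤ × ℤ) : ℝ × ℝ := ((i.1 : ℝ), (i.2 : ℝ))

open Module Set Metric
open scoped ENNReal Topology Pointwise

/-- The sum of `f` over the coset `L + z`, as a function of `z`. It is `[0, ∞]`-valued, so that no
summability condition is needed. -/
noncomputable def periodization {E : Type*} [AddCommGroup E] (L : Submodule ℤ E) (f : E → ℝ≥0∞)
    (z : E) : ℝ≥0∞ :=
  ∑' v : L, f (v + z)

section Periodization

variable {E : Type*} [AddCommGroup E] {L M : Submodule ℤ E} {f g : E → ℝ≥0∞}

theorem periodization_add (f g : E → ℝ≥0∞) (z : E) :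
    periodization L (fun x => f x + g x) z = periodization L f z + periodization L g z :=
  ENNReal.tsum_add

theorem periodization_mem_add {v : E} (hv : v ∈ L) (z : E) :
    periodization L f (v + z) = periodization L f z := by
  simpa [periodization, add_assoc] using
    (Equiv.addRight (⟨v, hv⟩ : L)).tsum_eq fun u : L => f (u + z)

theorem periodization_comp_sub_left {c : E} (hc : c ∈ L) (z : E) :
    periodization L (fun x => f (c - x)) z = periodization L f (-z) := by
  simpa [periodization, sub_eq_add_neg, add_assoc, add_comm, add_left_comm] using
    (Equiv.subLeft (⟨c, hc⟩ : L)).tsum_eq fun u : L => f (u + -z)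

theorem periodization_eq_card_mul_of_le (hML : M ≤ L) {c : ℝ≥0∞}
    (hM : ∀ z, periodization M f z = c) (z : E) :
    periodization L f z = ENat.card (L ⧸ M.submoduleOf L) * c := by
  have hcoset (q : L) : ∑' m : M.submoduleOf L, f (q + (m : L) + z) = c := by
    rw [← hM (q + z), periodization,
      ← (Submodule.submoduleOfEquivOfLe hML).toEquiv.tsum_eq]
    exact tsum_congr fun m => congrArg f (by
      change _ = (m : E) + _
      abel)
  obtain ⟨S, hS, -⟩ := (M.submoduleOf L).toAddSubgroup.exists_isComplement_left 0
  have hcard : ENat.card (L ⧸ M.submoduleOf L) = ENat.card S :=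
    ENat.card_congr hS.leftQuotientEquiv
  rw [periodization, ← (Equiv.ofBijective _ hS).tsum_eq, ENNReal.tsum_prod', hcard,
    ← ENNReal.tsum_const]
  exact tsum_congr fun q => hcoset q

variable [MeasurableSpace E]

theorem measurable_periodization [MeasurableAdd E] [Countable L] (hf : Measurable f) :
    Measurable (periodization L f) :=
  Measurable.tsum fun v => hf.comp (measurable_const_add (v : E))

theorem periodization_congr_ae [MeasurableAdd E] [Countable L] {μ : Measure E}
    [μ.IsAddLeftInvariant] (h : f =ᵐ[μ] g) : periodization L f =ᵐ[μ] periodization L g := by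
  have hshift : ∀ᵐ z ∂μ, ∀ v : L, f (v + z) = g (v + z) :=
    ae_all_iff.2 fun v => (measurePreserving_add_left μ (v : E)).quasiMeasurePreserving.ae h
  filter_upwards [hshift] with z hz using tsum_congr hz

theorem setLIntegral_periodization [MeasurableAdd E] [Countable L] {μ : Measure E}
    [μ.IsAddLeftInvariant] {D : Set E} (hD : IsAddFundamentalDomain L D μ) (hf : Measurable f) :
    ∫⁻ z in D, periodization L f z ∂μ = ∫⁻ z, f z ∂μ := by
  have : MeasurableConstVAdd L E := inferInstanceAs (MeasurableConstVAdd L.toAddSubgroup E)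
  have : VAddInvariantMeasure L E μ := inferInstanceAs (VAddInvariantMeasure L.toAddSubgroup E μ)
  rw [hD.lintegral_eq_tsum'']
  exact lintegral_tsum fun v => (hf.comp (measurable_const_add (v : E))).aemeasurable

end Periodization

theorem ae_linearMap_ne {E : Type*} [NormedAddCommGroup E] [NormedSpace ℝ E]
    [FiniteDimensional ℝ E] [MeasurableSpace E] [BorelSpace E] (μ : Measure E)
    [μ.IsAddHaarMeasure] {φ : E →ₗ[ℝ] ℝ} (hφ : φ ≠ 0) (t : ℝ) : ∀ᵐ z ∂μ, φ z ≠ t := by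
  let H : AffineSubspace ℝ E := (AffineSubspace.mk' t ⊥).comap φ.toAffineMap
  have hH (z : E) : z ∈ H ↔ φ z = t := by
    simp [H, AffineSubspace.mem_mk', sub_eq_zero]
  have hne : H ≠ ⊤ := by
    intro htop
    have hconst (z : E) : φ z = t := (hH z).1 (htop ▸ AffineSubspace.mem_top ℝ E z)
    exact hφ (LinearMap.ext fun z => by simpa using (hconst z).trans (hconst 0).symm)
  simpa [ae_iff, ← hH] using Measure.addHaar_affineSubspace μ H hne

/-- `T` and its point reflection `-T` together cover almost every point exactly `k` times modulo
the lattice `L`. -/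
def IsSymmMultitile {E : Type*} [AddCommGroup E] [MeasurableSpace E] (μ : Measure E)
    (L : Submodule ℤ E) (T : Set E) (k : ℝ≥0∞) : Prop :=
  ∀ᵐ z ∂μ, periodization L (T.indicator 1) z + periodization L (T.indicator 1) (-z) = k

theorem IsSymmMultitile.vadd {E : Type*} [AddCommGroup E] [MeasurableSpace E] {μ : Measure E}
    {L : Submodule ℤ E} {T : Set E} {k : ℝ≥0∞} (hT : IsSymmMultitile μ L T k) {v : E} (hv : v ∈ L) :
    IsSymmMultitile μ L (v +ᵥ T) k := by
  have htranslate (z : E) : periodization L ((v +ᵥ T).indicator 1) z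
      = periodization L (T.indicator 1) z := by
    rw [← periodization_mem_add hv]
    refine tsum_congr fun u => ?_
    rw [add_left_comm]
    have hmem : v + (u + z) ∈ v +ᵥ T ↔ u + z ∈ T := vadd_mem_vadd_set_iff
    by_cases hu : (u : E) + z ∈ T <;> simp [hmem, hu]
  simpa only [IsSymmMultitile, htranslate] using hT

theorem IsSymmMultitile.mul_measure_eq {E : Type*} [AddCommGroup E] [MeasurableSpace E]
    [MeasurableAdd E] [MeasurableNeg E] {μ : Measure E} [μ.IsAddLeftInvariant] [μ.IsNegInvariant]
    {L : Submodule ℤ E} [Countable L] {T D : Set E} {k : ℝ≥0∞} (hk : IsSymmMultitile μ L T k)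
    (hT : MeasurableSet T) (hD : IsAddFundamentalDomain L D μ) : k * μ D = 2 * μ T := by
  have hmeas : Measurable (T.indicator (1 : E → ℝ≥0∞)) := measurable_one.indicator hT
  have hneg (z : E) : periodization L (T.indicator 1) (-z)
      = periodization L (fun x => T.indicator 1 (-x)) z := by
    simpa using (periodization_comp_sub_left (f := T.indicator 1) L.zero_mem z).symm
  calc k * μ D = ∫⁻ z in D, (periodization L (T.indicator 1) z
        + periodization L (T.indicator 1) (-z)) ∂μ := by
        rw [← setLIntegral_const, lintegral_congr_ae (ae_restrict_of_ae hk)]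
    _ = ∫⁻ z, T.indicator 1 z ∂μ + ∫⁻ z, T.indicator 1 (-z) ∂μ := by
        simp only [hneg]
        rw [lintegral_add_left (measurable_periodization hmeas),
          setLIntegral_periodization hD hmeas, setLIntegral_periodization hD (by fun_prop)]
    _ = 2 * μ T := by
        rw [lintegral_neg_eq_self, lintegral_indicator_one hT, two_mul]

section Triangle

theorem convexHull_insert_zero_range_basis {ι E : Type*} [Fintype ι] [AddCommGroup E] [Module ℝ E]
    (b : Basis ι ℝ E) : convexHull ℝ (insert 0 (range b)) =
      {z | (∀ i, 0 ≤ b.repr z i) ∧ ∑ i, b.repr z i ≤ 1} := by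
  apply subset_antisymm
  · refine convexHull_min (insert_subset_iff.2 ⟨by simp, ?_⟩) ?_
    · rintro _ ⟨i, rfl⟩
      exact ⟨fun j => by by_cases h : i = j <;> simp [h], by simp⟩
    · rintro x ⟨hx, hx1⟩ y ⟨hy, hy1⟩ s t hs ht hst
      refine ⟨fun i => ?_, ?_⟩
      · simpa using add_nonneg (mul_nonneg hs (hx i)) (mul_nonneg ht (hy i))
      · simp only [map_add, map_smul, Finsupp.add_apply, Finsupp.smul_apply, smul_eq_mul,
          Finset.sum_add_distrib, ← Finset.mul_sum]
        nlinarith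
  · rintro z ⟨hz, hz1⟩
    have hcomb := (convex_convexHull ℝ (insert 0 (range b))).sum_mem (t := Finset.univ)
      (w := fun o : Option ι => o.elim (1 - ∑ i, b.repr z i) (b.repr z))
      (z := fun o => o.elim 0 b) (by rintro (_ | i) - <;> simp [hz, hz1])
      (by simp [Fintype.sum_option]) fun o _ => subset_convexHull ℝ _ (by cases o <;> simp)
    simpa [Fintype.sum_option, b.sum_repr] using hcomb

variable {E : Type*} [AddCommGroup E] [Module ℝ E] {b : Basis (Fin 2) ℝ E}

/-- The triangle with vertices `0`, `b 0`, `b 1`. -/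
def basisTriangle (b : Basis (Fin 2) ℝ E) : Set E := convexHull ℝ (insert 0 (range b))

theorem mem_basisTriangle {z : E} :
    z ∈ basisTriangle b ↔ 0 ≤ b.repr z 0 ∧ 0 ≤ b.repr z 1 ∧ b.repr z 0 + b.repr z 1 ≤ 1 := by
  simp [basisTriangle, convexHull_insert_zero_range_basis, and_assoc]

theorem convexHull_triple_eq_vadd_basisTriangle {P Q S : E} (h0 : b 0 = Q - P)
    (h1 : b 1 = S - P) : convexHull ℝ {P, Q, S} = P +ᵥ basisTriangle b := by
  have hrange : range b = {Q - P, S - P} := by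
    simp [Set.ext_iff, h0, h1, eq_comm]
  rw [basisTriangle, ← convexHull_vadd, hrange, vadd_set_insert, vadd_set_insert,
    vadd_set_singleton]
  simp

end Triangle

section SymmMultitile

variable {E : Type*} [NormedAddCommGroup E] [NormedSpace ℝ E]

theorem periodization_indicator_fundamentalDomain {ι : Type*} [Finite ι] (b : Basis ι ℝ E) (z : E) :
    periodization (Submodule.span ℤ (range b)) ((ZSpan.fundamentalDomain b).indicator 1) z = 1 := by
  obtain ⟨v, hv, huniq⟩ := ZSpan.exist_unique_vadd_mem_fundamentalDomain b z
  exact (tsum_eq_single v fun u hu => indicator_of_notMem (fun hmem => hu (huniq u hmem)) _).trans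
    (indicator_of_mem hv _)

variable [MeasurableSpace E] [BorelSpace E] (μ : Measure E) [μ.IsAddHaarMeasure]

theorem indicator_basisTriangle_add_reflection_ae_eq (b : Basis (Fin 2) ℝ E) :
    (fun z => (basisTriangle b).indicator 1 z + (basisTriangle b).indicator 1 (b 0 + b 1 - z))
      =ᵐ[μ] (ZSpan.fundamentalDomain b).indicator (1 : E → ℝ≥0∞) := by
  have : FiniteDimensional ℝ E := b.finiteDimensional_of_finite
  have hcoord (i) : b.coord i ≠ 0 := fun h => by simpa using LinearMap.congr_fun h (b i)
  have hsum : b.coord 0 + b.coord 1 ≠ 0 := fun h => by simpa using LinearMap.congr_fun h (b 0)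
  filter_upwards [ae_linearMap_ne μ (hcoord 0) 1, ae_linearMap_ne μ (hcoord 1) 1,
    ae_linearMap_ne μ hsum 1] with z h0 h1 h01
  simp only [Basis.coord_apply, LinearMap.add_apply] at h0 h1 h01
  have hrefl : b 0 + b 1 - z ∈ basisTriangle b ↔
      b.repr z 0 ≤ 1 ∧ b.repr z 1 ≤ 1 ∧ 1 ≤ b.repr z 0 + b.repr z 1 := by
    have hrepr (i) : b.repr (b 0 + b 1 - z) i = 1 - b.repr z i := by fin_cases i <;> simp
    simp only [mem_basisTriangle, hrepr]
    grind
  have hdom : z ∈ ZSpan.fundamentalDomain b ↔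
      (0 ≤ b.repr z 0 ∧ b.repr z 0 ≤ 1) ∧ (0 ≤ b.repr z 1 ∧ b.repr z 1 ≤ 1) := by
    simp [ZSpan.mem_fundamentalDomain, lt_iff_le_and_ne, h0, h1]
  simp only [indicator, mem_basisTriangle, hrefl, hdom, Pi.one_apply]
  split_ifs <;> grind

theorem exists_isSymmMultitile_basisTriangle {L : Submodule ℤ E} [Countable L]
    (b : Basis (Fin 2) ℝ E) (hb : ∀ i, b i ∈ L) : ∃ k, IsSymmMultitile μ L (basisTriangle b) k := by
  refine ⟨ENat.card (L ⧸ (Submodule.span ℤ (range b)).submoduleOf L) * 1, ?_⟩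
  filter_upwards [periodization_congr_ae (L := L)
    (indicator_basisTriangle_add_reflection_ae_eq μ b)] with z hz
  rwa [periodization_add, periodization_comp_sub_left (L.add_mem (hb 0) (hb 1)),
    periodization_eq_card_mul_of_le (Submodule.span_le.2 (range_subset_iff.2 hb))
      (periodization_indicator_fundamentalDomain b)] at hz

end SymmMultitile

theorem tendsto_periodization {E : Type*} [NormedAddCommGroup E] [ProperSpace E]
    {L : Submodule ℤ E} [DiscreteTopology L] {ι : Type*} {l : Filter ι} [l.NeBot]
    {f : ι → E → ℝ≥0∞} {g : E → ℝ≥0∞} {A : Set E} (hA : Bornology.IsBounded A)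
    (hfA : ∀ᶠ i in l, Function.support (f i) ⊆ A) (hfg : ∀ x, Tendsto (f · x) l (𝓝 (g x)))
    (z : E) :
    Tendsto (fun i => periodization L (f i) z) l (𝓝 (periodization L g z)) := by
  have hclosed : IsClosed (L : Set E) := @AddSubgroup.isClosed_of_discrete _ _ _ _ _
    L.toAddSubgroup (inferInstanceAs (DiscreteTopology L))
  have hfin : {v : L | (v : E) + z ∈ A}.Finite :=
    ((finite_isBounded_inter_isClosed DiscreteTopology.isDiscrete (hA.vadd (-z))
      hclosed).preimage_embedding (.subtype _)).subset fun v hv =>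
        ⟨by simpa [mem_vadd_set_iff_neg_vadd_mem, add_comm] using hv, v.2⟩
  have hgA : Function.support g ⊆ A := fun x hx => by
    by_contra hxA
    refine hx (tendsto_nhds_unique (hfg x) (tendsto_const_nhds.congr' ?_))
    filter_upwards [hfA] with i hi
    exact (Function.notMem_support.1 (notMem_subset hi hxA)).symm
  have hsum {h : E → ℝ≥0∞} (hh : Function.support h ⊆ A) :
      periodization L h z = ∑ v ∈ hfin.toFinset, h (v + z) :=
    tsum_eq_sum' fun v hv => hfin.mem_toFinset.2 (hh hv)
  rw [hsum hgA]
  refine (tendsto_finsetSum _ fun (v : L) _ => hfg (v + z)).congr' ?_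
  filter_upwards [hfA] with i hi using (hsum hi).symm

theorem periodization_setLIntegral_ball {E : Type*} [SeminormedAddCommGroup E] [MeasurableSpace E]
    [BorelSpace E] {L : Submodule ℤ E} [Countable L] {μ : Measure E} [μ.IsAddLeftInvariant]
    {f : E → ℝ≥0∞} (hf : Measurable f) (ρ : ℝ) (z : E) :
    periodization L (fun x => ∫⁻ w in ball x ρ, f w ∂μ) z
      = ∫⁻ w in ball z ρ, periodization L f w ∂μ := by
  simp only [periodization]
  rw [lintegral_tsum fun v : L => by fun_prop]
  refine tsum_congr fun v => ?_
  rw [← (measurePreserving_add_left μ (v : E)).setLIntegral_comp_preimage measurableSet_ball hf]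
  simp [preimage_add_ball]

section Density

variable {E : Type*} [PseudoMetricSpace E] [MeasurableSpace E]

/-- The proportion of the ball of radius `ρ` around `x` that is occupied by `T`. -/
noncomputable def ballDensity (μ : Measure E) (T : Set E) (ρ : ℝ) (x : E) : ℝ≥0∞ :=
  μ (T ∩ ball x ρ) / μ (ball x ρ)

/-- `χ` is the density function of `T`: the proportion of small balls around `x` occupied by `T`
tends to `χ x` for every `x`. -/
def IsDensityFunction (μ : Measure E) (T : Set E) (χ : E → ℝ) : Prop :=
  ∀ x, Tendsto (fun ρ => μ.real (T ∩ ball x ρ) / μ.real (ball x ρ)) (𝓝[>] 0) (𝓝 (χ x))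

variable {μ : Measure E} {T : Set E} {χ : E → ℝ} {ρ : ℝ} {x : E}

theorem toReal_ballDensity :
    (ballDensity μ T ρ x).toReal = μ.real (T ∩ ball x ρ) / μ.real (ball x ρ) :=
  ENNReal.toReal_div _ _

theorem ballDensity_le_one : ballDensity μ T ρ x ≤ 1 :=
  ENNReal.div_le_of_le_mul (by simpa using measure_mono inter_subset_right)

theorem IsDensityFunction.nonneg (hχ : IsDensityFunction μ T χ) (x : E) : 0 ≤ χ x :=
  ge_of_tendsto' (hχ x) fun _ => by positivity

theorem IsDensityFunction.tendsto_ballDensity (hχ : IsDensityFunction μ T χ) (x : E) :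
    Tendsto (fun ρ => ballDensity μ T ρ x) (𝓝[>] 0) (𝓝 (ENNReal.ofReal (χ x))) := by
  refine (ENNReal.tendsto_ofReal (hχ x)).congr fun ρ => ?_
  rw [← toReal_ballDensity,
    ENNReal.ofReal_toReal (ballDensity_le_one.trans_lt ENNReal.one_lt_top).ne]

theorem IsDensityFunction.ofReal_le_one (hχ : IsDensityFunction μ T χ) (x : E) :
    ENNReal.ofReal (χ x) ≤ 1 :=
  le_of_tendsto' (hχ.tendsto_ballDensity x) fun _ => ballDensity_le_one

theorem support_ballDensity_subset (hρ : ρ ≤ 1) :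
    Function.support (ballDensity μ T ρ) ⊆ cthickening 1 T := by
  intro x hx
  obtain ⟨w, hwT, hwx⟩ : (T ∩ ball x ρ).Nonempty := by
    refine nonempty_iff_ne_empty.2 fun hempty => hx ?_
    simp [ballDensity, hempty]
  exact mem_cthickening_of_dist_le x w 1 T hwT ((mem_ball'.1 hwx).le.trans hρ)

end Density

section LatticeDensity

variable {E : Type*} [NormedAddCommGroup E] [ProperSpace E] [MeasurableSpace E] [BorelSpace E]
  {μ : Measure E} [μ.IsAddHaarMeasure] {T : Set E} {χ : E → ℝ}

theorem measurable_ballDensity (hT : MeasurableSet T) (ρ : ℝ) :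
    Measurable (ballDensity μ T ρ) := by
  have hs : MeasurableSet {p : E × E | p.2 ∈ T ∧ dist p.2 p.1 < ρ} :=
    (measurable_snd hT).inter
      (measurableSet_lt (measurable_snd.dist measurable_fst) measurable_const)
  have hball : ballDensity μ T ρ = fun x => μ (T ∩ ball x ρ) / μ (ball 0 ρ) :=
    funext fun x => by rw [ballDensity, Measure.addHaar_ball_center]
  rw [hball]
  exact (measurable_measure_prodMk_left hs).div_const _

theorem IsDensityFunction.measurable (hχ : IsDensityFunction μ T χ) (hT : MeasurableSet T) :
    Measurable χ := by
  have hradii : Tendsto (fun n : ℕ => 1 / ((n : ℝ) + 1)) atTop (𝓝[>] 0) :=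
    tendsto_nhdsWithin_iff.2 ⟨tendsto_one_div_add_atTop_nhds_zero_nat,
      Eventually.of_forall fun n => Nat.one_div_pos_of_nat (α := ℝ)⟩
  refine measurable_of_tendsto_metrizable
    (f := fun (n : ℕ) x => (ballDensity μ T (1 / ((n : ℝ) + 1)) x).toReal)
    (fun n => (measurable_ballDensity hT _).ennreal_toReal) (tendsto_pi_nhds.2 fun x => ?_)
  simpa only [toReal_ballDensity, Function.comp_def] using (hχ x).comp hradii

variable {L : Submodule ℤ E} {k : ℝ≥0∞}

theorem IsSymmMultitile.periodization_ballDensity_add_neg [Countable L] {ρ : ℝ}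
    (hk : IsSymmMultitile μ L T k) (hT : MeasurableSet T) (hρ : 0 < ρ) (y : E) :
    periodization L (ballDensity μ T ρ) y + periodization L (ballDensity μ T ρ) (-y) = k := by
  have hmeas : Measurable (T.indicator (1 : E → ℝ≥0∞)) := measurable_one.indicator hT
  have hball (z : E) : periodization L (ballDensity μ T ρ) z
      = (∫⁻ w in ball z ρ, periodization L (T.indicator 1) w ∂μ) / μ (ball 0 ρ) := by
    rw [← periodization_setLIntegral_ball hmeas]
    simp only [periodization, div_eq_mul_inv, ← ENNReal.tsum_mul_right, ballDensity,
      lintegral_indicator_one hT, Measure.restrict_apply hT, Measure.addHaar_ball_center]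
  have hneg : ∫⁻ w in ball (-y) ρ, periodization L (T.indicator 1) w ∂μ
      = ∫⁻ w in ball y ρ, periodization L (T.indicator 1) (-w) ∂μ := by
    rw [← (Measure.measurePreserving_neg μ).setLIntegral_comp_preimage measurableSet_ball
      (measurable_periodization hmeas)]
    simp
  calc _ = (∫⁻ w in ball y ρ, (periodization L (T.indicator 1) w
        + periodization L (T.indicator 1) (-w)) ∂μ) / μ (ball 0 ρ) := by
        rw [hball, hball, hneg, lintegral_add_left (measurable_periodization hmeas),
          ENNReal.add_div]
    _ = k * μ (ball y ρ) / μ (ball 0 ρ) := by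
        rw [← setLIntegral_const, lintegral_congr_ae (ae_restrict_of_ae hk)]
    _ = k := by
        rw [Measure.addHaar_ball_center]
        exact ENNReal.mul_div_cancel_right (measure_ball_pos μ 0 hρ).ne' measure_ball_lt_top.ne

theorem IsDensityFunction.periodization_add_neg [DiscreteTopology L] (hχ : IsDensityFunction μ T χ)
    (hk : IsSymmMultitile μ L T k) (hT : MeasurableSet T) (hTb : Bornology.IsBounded T) (y : E) :
    periodization L (fun x => ENNReal.ofReal (χ x)) y
      + periodization L (fun x => ENNReal.ofReal (χ x)) (-y) = k := by
  have : Countable L := TopologicalSpace.separableSpace_iff_countable.1 inferInstance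
  have hsupp : ∀ᶠ ρ in 𝓝[>] (0 : ℝ),
      Function.support (ballDensity μ T ρ) ⊆ cthickening 1 T := by
    filter_upwards [mem_nhdsWithin_of_mem_nhds (Iic_mem_nhds one_pos)] with ρ hρ
    exact support_ballDensity_subset hρ
  have hlim (z : E) : Tendsto (fun ρ => periodization L (ballDensity μ T ρ) z) (𝓝[>] 0)
      (𝓝 (periodization L (fun x => ENNReal.ofReal (χ x)) z)) :=
    tendsto_periodization hTb.cthickening hsupp hχ.tendsto_ballDensity z
  refine tendsto_nhds_unique ((hlim y).add (hlim (-y))) (tendsto_const_nhds.congr' ?_)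
  filter_upwards [self_mem_nhdsWithin] with ρ hρ
  exact (hk.periodization_ballDensity_add_neg hT hρ y).symm

end LatticeDensity

section Bond

theorem setLIntegral_Icc_comp_one_sub (g : ℝ → ℝ≥0∞) :
    ∫⁻ l in Icc 0 1, g (1 - l) = ∫⁻ l in Icc 0 1, g l := by
  rw [← (Measure.measurePreserving_sub_left volume (1 : ℝ)).setLIntegral_comp_preimage_emb
    (MeasurableEquiv.subLeft (1 : ℝ)).measurableEmbedding g (Icc 0 1)]
  simp

theorem intervalIntegral_segment_eq_toReal {E : Type*} [NormedAddCommGroup E] [NormedSpace ℝ E]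
    [MeasurableSpace E] [BorelSpace E] {f : E → ℝ} (hf : Measurable f) (hf0 : ∀ x, 0 ≤ f x)
    (x r : E) : ∫ l in (0 : ℝ)..1, f (x + l • r)
      = (∫⁻ l in Icc (0 : ℝ) 1, ENNReal.ofReal (f (x + l • r))).toReal := by
  rw [intervalIntegral.integral_of_le zero_le_one, ← integral_Icc_eq_integral_Ioc,
    integral_eq_lintegral_of_nonneg_ae (Eventually.of_forall fun _ => hf0 _)
      (hf.comp (by fun_prop)).aestronglyMeasurable]

theorem two_mul_tsum_setLIntegral_segment {E : Type*} [NormedAddCommGroup E] [NormedSpace ℝ E]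
    [MeasurableSpace E] [BorelSpace E] {L : Submodule ℤ E} [Countable L] {f : E → ℝ≥0∞} {k : ℝ≥0∞}
    (hf : Measurable f) (hk : ∀ y, periodization L f y + periodization L f (-y) = k) {r : E}
    (hr : r ∈ L) : 2 * ∑' v : L, ∫⁻ l in Icc (0 : ℝ) 1, f (v + l • r) = k := by
  have hbond : ∑' v : L, ∫⁻ l in Icc (0 : ℝ) 1, f (v + l • r)
      = ∫⁻ l in Icc (0 : ℝ) 1, periodization L f (l • r) :=
    (lintegral_tsum fun v => by fun_prop).symm
  have hmeas : Measurable (periodization L f) := measurable_periodization hf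
  have hreverse : ∫⁻ l in Icc (0 : ℝ) 1, periodization L f (l • r)
      = ∫⁻ l in Icc (0 : ℝ) 1, periodization L f (-(l • r)) := by
    rw [← setLIntegral_Icc_comp_one_sub]
    refine lintegral_congr fun l => ?_
    rw [sub_smul, one_smul, sub_eq_add_neg, periodization_mem_add hr]
  calc 2 * ∑' v : L, ∫⁻ l in Icc (0 : ℝ) 1, f (v + l • r)
      = ∫⁻ l in Icc (0 : ℝ) 1, (periodization L f (l • r) + periodization L f (-(l • r))) := by
        rw [lintegral_add_left (by fun_prop), ← hreverse, ← two_mul, hbond]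
    _ = k := by simp [hk]

end Bond

section General

variable {E : Type*} [NormedAddCommGroup E] [NormedSpace ℝ E] [MeasurableSpace E] [BorelSpace E]

theorem IsDensityFunction.tsum_intervalIntegral_segment [FiniteDimensional ℝ E] {μ : Measure E}
    [μ.IsAddHaarMeasure] {L : Submodule ℤ E} [DiscreteTopology L] [IsZLattice ℝ L] {T : Set E}
    {χ : E → ℝ} {k : ℝ≥0∞} (hχ : IsDensityFunction μ T χ) (hk : IsSymmMultitile μ L T k)
    (hT : MeasurableSet T) (hTb : Bornology.IsBounded T) {r : E} (hr : r ∈ L) :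
    ∑' v : L, ∫ l in (0 : ℝ)..1, χ (v + l • r) = μ.real T / ZLattice.covolume L μ := by
  have hmeas : Measurable χ := hχ.measurable hT
  let D := ZSpan.fundamentalDomain ((Free.chooseBasis ℤ L).ofZLatticeBasis ℝ)
  have hD : IsAddFundamentalDomain L D μ := ZLattice.isAddFundamentalDomain _ μ
  have hbond := two_mul_tsum_setLIntegral_segment hmeas.ennreal_ofReal
    (hχ.periodization_add_neg hk hT hTb) hr
  have htwo := hk.mul_measure_eq hT hD
  rw [← hbond, mul_assoc] at htwo
  have hfinite (v : L) : ∫⁻ l in Icc (0 : ℝ) 1, ENNReal.ofReal (χ (v + l • r)) ≠ ∞ := by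
    refine ((lintegral_mono fun _ => hχ.ofReal_le_one _).trans_lt ?_).ne
    simp
  rw [eq_div_iff (ZLattice.covolume_ne_zero L μ),
    ZLattice.covolume_eq_measure_fundamentalDomain L μ hD,
    tsum_congr fun v : L => intervalIntegral_segment_eq_toReal hmeas hχ.nonneg v r,
    ← ENNReal.tsum_toReal_eq hfinite, Measure.real, Measure.real, ← ENNReal.toReal_mul,
    (ENNReal.mul_right_inj two_ne_zero ENNReal.ofNat_ne_top).1 htwo]

theorem exists_basis_eq_sub_of_affineIndependent {V : Type*} [AddCommGroup V] [Module ℝ V]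
    (hV : finrank ℝ V = 2) {P Q S : V} (hind : AffineIndependent ℝ ![P, Q, S]) :
    ∃ b : Basis (Fin 2) ℝ V, b 0 = Q - P ∧ b 1 = S - P := by
  have hvec : ![Q - P, S - P] = fun i : Fin 2 => ![P, Q, S] i.succ -ᵥ P := by
    ext i
    fin_cases i <;> rfl
  have hli : LinearIndependent ℝ ![Q - P, S - P] := hvec ▸
    ((affineIndependent_iff_linearIndependent_vsub ℝ _ 0).1 hind).comp
      (fun i : Fin 2 => ⟨i.succ, i.succ_ne_zero⟩) fun i j hij => by simpa using hij
  exact ⟨basisOfLinearIndependentOfCardEqFinrank hli (by simp [hV]), by simp, by simp⟩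

theorem exists_isSymmMultitile_convexHull (hE : finrank ℝ E = 2) (μ : Measure E)
    [μ.IsAddHaarMeasure] {L : Submodule ℤ E} [Countable L] {P Q S : E} (hP : P ∈ L) (hQ : Q ∈ L)
    (hS : S ∈ L) (hind : AffineIndependent ℝ ![P, Q, S]) :
    ∃ k, IsSymmMultitile μ L (convexHull ℝ {P, Q, S}) k := by
  obtain ⟨b, h0, h1⟩ := exists_basis_eq_sub_of_affineIndependent hE hind
  obtain ⟨k, hk⟩ := exists_isSymmMultitile_basisTriangle μ b (L := L) <|
    Fin.forall_fin_two.2 ⟨h0 ▸ L.sub_mem hQ hP, h1 ▸ L.sub_mem hS hP⟩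
  exact ⟨k, convexHull_triple_eq_vadd_basisTriangle h0 h1 ▸ hk.vadd hP⟩

theorem bond_density_2d_general (hE : finrank ℝ E = 2) (μ : Measure E) [μ.IsAddHaarMeasure]
    (L : Submodule ℤ E) [DiscreteTopology L] [IsZLattice ℝ L] {P Q S r : E} (hP : P ∈ L)
    (hQ : Q ∈ L) (hS : S ∈ L) (hr : r ∈ L) (hind : AffineIndependent ℝ ![P, Q, S]) {χ : E → ℝ}
    (hχ : IsDensityFunction μ (convexHull ℝ {P, Q, S}) χ) :
    ∑' v : L, ∫ l in (0 : ℝ)..1, χ ((1 - l) • (v : E) + l • (v + r))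
      = μ.real (convexHull ℝ {P, Q, S}) / ZLattice.covolume L μ := by
  have : FiniteDimensional ℝ E := .of_finrank_pos (by lia)
  have hcompact : IsCompact (convexHull ℝ {P, Q, S}) :=
    (Set.toFinite _).isCompact_convexHull (𝕜 := ℝ)
  obtain ⟨k, hk⟩ := exists_isSymmMultitile_convexHull hE μ hP hQ hS hind
  have hpoint (v : L) (l : ℝ) : (1 - l) • (v : E) + l • (v + r) = v + l • r := by module
  simpa only [hpoint] using
    hχ.tsum_intervalIntegral_segment hk hcompact.measurableSet hcompact.isBounded hr

end General

section IntegerLattice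

/-- `ℤ²` as a lattice in `ℝ²`, in the form of a `ℤ`-span so that the `ZSpan` API applies. -/
abbrev intLattice : Submodule ℤ (ℝ × ℝ) := Submodule.span ℤ (range (Basis.finTwoProd ℝ))

/-- The embedding `c2` as an isomorphism of `ℤ²` onto `intLattice`. -/
noncomputable def intLatticeEquiv : (ℤ × ℤ) ≃ₗ[ℤ] intLattice :=
  (Basis.finTwoProd ℤ).equiv ((Basis.finTwoProd ℝ).restrictScalars ℤ) (Equiv.refl _)

theorem coe_intLatticeEquiv (i : ℤ × ℤ) : (intLatticeEquiv i : ℝ × ℝ) = c2 i := by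
  conv_lhs => rw [← (Basis.finTwoProd ℤ).sum_repr i, intLatticeEquiv]
  simp only [Fin.sum_univ_two, map_add, map_smul, Basis.equiv_apply, Equiv.refl_apply]
  simp [c2]

theorem c2_mem_intLattice (i : ℤ × ℤ) : c2 i ∈ intLattice :=
  coe_intLatticeEquiv i ▸ (intLatticeEquiv i).2

theorem covolume_intLattice : ZLattice.covolume intLattice = 1 := by
  have hdom : ZSpan.fundamentalDomain (Basis.finTwoProd ℝ) = Ico (0 : ℝ) 1 ×ˢ Ico (0 : ℝ) 1 := by
    ext z
    simp [ZSpan.mem_fundamentalDomain]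
  rw [ZLattice.covolume_eq_measure_fundamentalDomain _ _
    (ZSpan.isAddFundamentalDomain (Basis.finTwoProd ℝ) volume), hdom]
  simp [Measure.volume_eq_prod, measureReal_prod_prod]

end IntegerLattice

/-- Two-dimensional bond-density lemma: let `T` be a (nondegenerate) triangle in `ℝ²` with
vertices in the lattice `ℤ²`, let `r ∈ ℤ²`, `r ≠ 0`, and let `χ` be the density function of `T`,
i.e. `χ x = lim_{ρ→0} |T ∩ B_ρ(x)| / |B_ρ(x)|` (the limit is assumed to exist for every `x`).
Then the sum over all `i ∈ ℤ²` of the bond averages `⨍_{(i,i+r)} χ db` equals the area `|T|`,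
where `⨍_{(i,i+r)} f db = ∫₀¹ f((1-λ) i + λ (i+r)) dλ`. -/
theorem bond_density_2d (P Q S : ℤ × ℤ)
    (hind : AffineIndependent ℝ ![c2 P, c2 Q, c2 S])
    (T : Set (ℝ × ℝ)) (hT : T = convexHull ℝ {c2 P, c2 Q, c2 S})
    (r : ℤ × ℤ) (hr : r ≠ 0)
    (χ : ℝ × ℝ → ℝ)
    (hχ : ∀ x : ℝ × ℝ,
      Tendsto (fun ρ : ℝ =>
          (volume (T ∩ Metric.ball x ρ)).toReal / (volume (Metric.ball x ρ)).toReal)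
        (nhdsWithin 0 (Set.Ioi (0:ℝ))) (nhds (χ x))) :
    ∑' i : ℤ × ℤ, ∫ l in (0:ℝ)..1, χ ((1 - l) • c2 i + l • c2 (i + r))
      = (volume T).toReal := by
  subst hT
  have hgen := bond_density_2d_general (by simp) volume intLattice (c2_mem_intLattice P)
    (c2_mem_intLattice Q) (c2_mem_intLattice S) (c2_mem_intLattice r) hind hχ
  rw [covolume_intLattice, div_one, ← intLatticeEquiv.toEquiv.tsum_eq] at hgen
  have hadd (i : ℤ × ℤ) : c2 (i + r) = c2 i + c2 r := by simp [c2]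
  simpa only [hadd, coe_intLatticeEquiv, LinearEquiv.coe_toEquiv, measureReal_def] using hgen
end

section
/- Let Ω_c ⊂ ℝ² be a polygon triangulated by T with all vertices in ℤ², r ∈ ℤ² \ {0}, y ∈ P₁(T), and φ : ℝ² → ℝ continuous. Then ∑_{i∈ℤ²} ⨍_{(i,i+r)} χ_{Ω_c} φ(D_r y) db = ∫_{Ω_c} φ(D_r y) dΩ. -/
open MeasureTheory Filter

/-- The closed triangle with vertices at the lattice points of `T`. -/
noncomputable def tri (T : (ℤ × ℤ) × (ℤ × ℤ) × (ℤ × ℤ)) : Set (ℝ × ℝ) :=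
  convexHull ℝ {c2 T.1, c2 T.2.1, c2 T.2.2}

/-- The density ("angular characteristic") function
`χ_A(x) = lim_{ρ→0} |A ∩ B_ρ(x)|/|B_ρ(x)|`. -/
noncomputable def dens (A : Set (ℝ × ℝ)) (x : ℝ × ℝ) : ℝ :=
  limUnder (nhdsWithin 0 (Set.Ioi (0:ℝ)))
    fun ρ : ℝ => (volume (A ∩ Metric.ball x ρ)).toReal / (volume (Metric.ball x ρ)).toReal

/-- One-sided directional derivative `D_r y (x)` of a vector-valued function. -/
noncomputable def Dr (r : ℝ × ℝ) (y : ℝ × ℝ → ℝ × ℝ) (x : ℝ × ℝ) : ℝ × ℝ :=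
  derivWithin (fun s : ℝ => y (x + s • r)) (Set.Ioi (0 : ℝ)) 0

/-!
The union of a lattice triangle `T` and its reflection through the midpoint of an edge is a lattice
parallelogram, whose translates by the lattice cover the plane with constant multiplicity. Hence
the number `N z` of lattice translates of `z` in `T` satisfies `N z + N (-z) = 2 |T|` for almost
every `z`. Averaging over balls and letting the radius tend to zero turns this into the pointwise
identity `∑ᵥ χ_T (v + z) + ∑ᵥ χ_T (v - z) = 2 |T|` for the density `χ_T`; the density exists
everywhere because the fraction of a ball occupied by a convex set is antitone in the radius when
the centre lies in the set. For `z = l r` with `l ∈ [0, 1]`, the reflection `l ↦ 1 - l` exchanges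
the two sums, so each of them integrates to `|T|`. Finally `D_r y` is constant on each triangle up
to a null set, both in the plane and along a bond.
-/

open scoped ENNReal Topology Pointwise

namespace BondDensity

section BallFraction

variable {E : Type*} [NormedAddCommGroup E] [MeasurableSpace E] {μ : Measure E}
  {A : Set E} {x : E} {ρ : ℝ}

/-- The fraction of the ball of radius `ρ` around `x` that `A` occupies, as an extended nonnegative
real; its limit as `ρ → 0⁺` is the density of `A` at `x`. -/
noncomputable def ballFraction (μ : Measure E) (A : Set E) (x : E) (ρ : ℝ) : ℝ≥0∞ :=
  μ (A ∩ Metric.ball x ρ) / μ (Metric.ball x ρ)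

lemma ballFraction_le_one : ballFraction μ A x ρ ≤ 1 :=
  ENNReal.div_le_of_le_mul (by simpa using measure_mono Set.inter_subset_right)

lemma ne_top_of_tendsto_ballFraction {d : ℝ≥0∞}
    (hd : Tendsto (ballFraction μ A x) (𝓝[>] 0) (𝓝 d)) : d ≠ ⊤ :=
  ne_top_of_le_ne_top ENNReal.one_ne_top (le_of_tendsto' hd fun _ => ballFraction_le_one)

lemma tendsto_ballFraction_of_notMem (hA : IsClosed A) (hx : x ∉ A) :
    Tendsto (ballFraction μ A x) (𝓝[>] 0) (𝓝 0) := by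
  obtain ⟨ε, hε, hball⟩ := Metric.isOpen_iff.1 hA.isOpen_compl x hx
  refine tendsto_const_nhds.congr' ?_
  filter_upwards [Ioo_mem_nhdsGT hε] with ρ hρ
  have hdisj : Disjoint A (Metric.ball x ρ) :=
    Set.disjoint_right.2 fun z hz => hball (Metric.ball_subset_ball hρ.2.le hz)
  rw [ballFraction, hdisj.inter_eq, measure_empty, ENNReal.zero_div]

lemma ballFraction_biUnion [OpensMeasurableSpace E] {ι : Type*} {s : Finset ι} {S : ι → Set E}
    (hS : ∀ i ∈ s, NullMeasurableSet (S i) μ)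
    (hdisj : (s : Set ι).Pairwise (Function.onFun (AEDisjoint μ) S)) (x : E) (ρ : ℝ) :
    ballFraction μ (⋃ i ∈ s, S i) x ρ = ∑ i ∈ s, ballFraction μ (S i) x ρ := by
  simp only [ballFraction, div_eq_mul_inv, ← Finset.sum_mul]
  rw [Set.iUnion₂_inter, measure_biUnion_finset₀]
  · exact fun i hi j hj hne => (hdisj hi hj hne).mono Set.inter_subset_left Set.inter_subset_left
  · exact fun i hi => (hS i hi).inter measurableSet_ball.nullMeasurableSet

lemma measurable_ballFraction [OpensMeasurableSpace E] [SecondCountableTopology E] [SFinite μ]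
    (hA : MeasurableSet A) (ρ : ℝ) : Measurable fun x => ballFraction μ A x ρ := by
  have hball : MeasurableSet {p : E × E | p.2 ∈ Metric.ball p.1 ρ} :=
    (isOpen_lt (continuous_snd.dist continuous_fst) continuous_const).measurableSet
  exact (measurable_measure_prodMk_left ((measurable_snd hA).inter hball)).div
    (measurable_measure_prodMk_left hball)

lemma measurable_of_tendsto_ballFraction [OpensMeasurableSpace E] [SecondCountableTopology E]
    [SFinite μ] {d : E → ℝ≥0∞} (hA : MeasurableSet A)
    (hd : ∀ x, Tendsto (ballFraction μ A x) (𝓝[>] 0) (𝓝 (d x))) : Measurable d :=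
  ENNReal.measurable_of_tendsto' (𝓝[>] 0) (measurable_ballFraction hA) (tendsto_pi_nhds.2 hd)

variable [BorelSpace E] [NormedSpace ℝ E] [FiniteDimensional ℝ E] [μ.IsAddHaarMeasure]

-- The homothety about `x` that shrinks one ball to the other keeps the points of `A` inside `A`.
lemma antitoneOn_ballFraction (hA : StarConvex ℝ x A) :
    AntitoneOn (ballFraction μ A x) (Set.Ioi 0) := by
  intro ρ hρ σ hσ hle
  rw [Set.mem_Ioi] at hρ hσ
  set k := ρ / σ
  have hk : 0 < k := div_pos hρ hσ
  have himage : AffineMap.homothety x k '' (A ∩ Metric.ball x σ) ⊆ A ∩ Metric.ball x ρ := by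
    rintro _ ⟨z, ⟨hzA, hz⟩, rfl⟩
    refine ⟨?_, ?_⟩
    · rw [AffineMap.homothety_eq_lineMap]
      exact hA.segment_subset hzA (lineMap_mem_segment ℝ x z ⟨hk.le, (div_le_one hσ).2 hle⟩)
    · rw [Metric.mem_ball] at hz ⊢
      rw [dist_homothety_center, Real.norm_of_nonneg hk.le, dist_comm]
      calc k * dist z x < k * σ := by gcongr
        _ = ρ := div_mul_cancel₀ _ hσ.ne'
  set c := ENNReal.ofReal (k ^ Module.finrank ℝ E)
  have hc : c ≠ 0 := by positivity
  have hball : μ (Metric.ball x ρ) = c * μ (Metric.ball x σ) := by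
    rw [← div_mul_cancel₀ ρ hσ.ne', Measure.addHaar_ball_mul_of_pos μ x hk,
      Measure.addHaar_ball_center μ x]
  calc ballFraction μ A x σ
      = c * μ (A ∩ Metric.ball x σ) / (c * μ (Metric.ball x σ)) :=
        (ENNReal.mul_div_mul_left _ _ hc ENNReal.ofReal_ne_top).symm
    _ = μ (AffineMap.homothety x k '' (A ∩ Metric.ball x σ)) / μ (Metric.ball x ρ) := by
        rw [Measure.addHaar_image_homothety, abs_of_nonneg (by positivity), hball]
    _ ≤ ballFraction μ A x ρ := ENNReal.div_le_div_right (measure_mono himage) _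

lemma exists_tendsto_ballFraction (hA : Convex ℝ A) (hclosed : IsClosed A) (x : E) :
    ∃ d, Tendsto (ballFraction μ A x) (𝓝[>] 0) (𝓝 d) := by
  by_cases hx : x ∈ A
  · exact ⟨_, (antitoneOn_ballFraction (hA.starConvex hx)).tendsto_nhdsGT ⟨⊤, fun _ _ => le_top⟩⟩
  · exact ⟨0, tendsto_ballFraction_of_notMem hclosed hx⟩

end BallFraction

section LatticeSum

variable {E : Type*} [AddCommGroup E] {L : Submodule ℤ E} {f : E → ℝ≥0∞}

/-- The sum of `f` over the translate `L + z` of the lattice `L`; for the indicator of a set it is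
the number of points of `L + z` in that set. -/
noncomputable def latticeSum (L : Submodule ℤ E) (f : E → ℝ≥0∞) (z : E) : ℝ≥0∞ :=
  ∑' v : L, f (v + z)

lemma latticeSum_add_left {w : E} (hw : w ∈ L) (z : E) :
    latticeSum L f (w + z) = latticeSum L f z := by
  simpa only [latticeSum, Equiv.coe_addRight, Submodule.coe_add, add_assoc] using
    (Equiv.addRight (⟨w, hw⟩ : L)).tsum_eq fun v : L => f (v + z)

lemma tsum_sub_eq_latticeSum (z : E) : ∑' v : L, f (z - v) = latticeSum L f z := by
  simpa only [latticeSum, Equiv.neg_apply, Submodule.coe_neg, neg_add_eq_sub] using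
    (Equiv.neg L).tsum_eq fun v : L => f (v + z)

lemma tsum_mul_latticeSum {M : Submodule ℤ E} (hML : M ≤ L) (f g : E → ℝ≥0∞) (z z' : E) :
    ∑' v : L, f (v + z) * latticeSum M g (v + z') =
      ∑' v : L, latticeSum M f (v + z) * g (v + z') := by
  calc ∑' v : L, f (v + z) * latticeSum M g (v + z')
      = ∑' w : M, ∑' v : L, f (v + z) * g (w + (v + z')) := by
        simp only [latticeSum, ← ENNReal.tsum_mul_left]
        exact ENNReal.tsum_comm
    _ = ∑' w : M, ∑' v : L, f (v + z - w) * g (v + z') := by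
        refine tsum_congr fun w => ?_
        rw [← (Equiv.addRight (⟨w, hML w.2⟩ : L)).tsum_eq fun v : L => f (v + z - w) * g (v + z')]
        refine tsum_congr fun v => ?_
        simp only [Equiv.coe_addRight, Submodule.coe_add]
        congr 2 <;> abel
    _ = ∑' v : L, latticeSum M f (v + z) * g (v + z') := by
        rw [ENNReal.tsum_comm]
        simp only [ENNReal.tsum_mul_right, tsum_sub_eq_latticeSum]

lemma measurable_latticeSum [MeasurableSpace E] [MeasurableAdd E] [Countable L]
    (hf : Measurable f) : Measurable (latticeSum L f) :=
  Measurable.tsum fun v => hf.comp (measurable_const_add (v : E))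

lemma setLIntegral_latticeSum [MeasurableSpace E] [MeasurableAdd E] [Countable L] {μ : Measure E}
    [μ.IsAddLeftInvariant] {F : Set E} (hF : IsAddFundamentalDomain L F μ) (hf : Measurable f) :
    ∫⁻ z in F, latticeSum L f z ∂μ = ∫⁻ z, f z ∂μ := by
  have : MeasurableConstVAdd L E := ⟨fun v => measurable_const_add (v : E)⟩
  have : VAddInvariantMeasure L E μ := ⟨fun v _ _ => measure_preimage_add μ (v : E) _⟩
  rw [hF.lintegral_eq_tsum'']
  exact lintegral_tsum fun v => (hf.comp (measurable_const_vadd v)).aemeasurable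

end LatticeSum

section FundamentalDomain

variable {E : Type*} [NormedAddCommGroup E] [NormedSpace ℝ E] {L : Submodule ℤ E}
  {ι : Type*} [Finite ι] {b : Module.Basis ι ℝ E}

lemma latticeSum_span_indicator_fundamentalDomain (z : E) :
    latticeSum (Submodule.span ℤ (Set.range b)) ((ZSpan.fundamentalDomain b).indicator 1) z
      = 1 := by
  obtain ⟨v, hv, huniq⟩ := ZSpan.exist_unique_vadd_mem_fundamentalDomain b z
  exact (tsum_eq_single v fun w hw => Set.indicator_of_notMem (mt (huniq w) hw) 1).trans
    (Set.indicator_of_mem hv 1)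

lemma latticeSum_indicator_fundamentalDomain_eq (hb : Submodule.span ℤ (Set.range b) ≤ L)
    (z z' : E) :
    latticeSum L ((ZSpan.fundamentalDomain b).indicator 1) z =
      latticeSum L ((ZSpan.fundamentalDomain b).indicator 1) z' := by
  rw [latticeSum, latticeSum]
  simpa only [latticeSum_span_indicator_fundamentalDomain, mul_one, one_mul] using
    tsum_mul_latticeSum hb ((ZSpan.fundamentalDomain b).indicator 1)
      ((ZSpan.fundamentalDomain b).indicator 1) z z'

lemma latticeSum_indicator_fundamentalDomain [MeasurableSpace E] [BorelSpace E]
    [Countable L] {μ : Measure E} [μ.IsAddHaarMeasure] {F : Set E}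
    (hb : Submodule.span ℤ (Set.range b) ≤ L) (hF : IsAddFundamentalDomain L F μ)
    (hF₀ : μ F ≠ 0) (hF_top : μ F ≠ ⊤) (z : E) :
    latticeSum L ((ZSpan.fundamentalDomain b).indicator 1) z =
      μ (ZSpan.fundamentalDomain b) / μ F := by
  have hmeas := ZSpan.fundamentalDomain_measurableSet b
  have hint := setLIntegral_latticeSum hF (measurable_one.indicator hmeas)
  simp only [latticeSum_indicator_fundamentalDomain_eq hb _ z, setLIntegral_const,
    lintegral_indicator_one hmeas] at hint
  rw [← hint, ENNReal.mul_div_cancel_right hF₀ hF_top]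

end FundamentalDomain

section Averaging

variable {E : Type*} [NormedAddCommGroup E] {A : Set E} {L : Submodule ℤ E}

lemma finite_setOf_nonempty_inter_ball [ProperSpace E] [DiscreteTopology L]
    (hA : Bornology.IsBounded A) (z : E) (ρ : ℝ) :
    {v : L | (A ∩ Metric.ball (v + z) ρ).Nonempty}.Finite := by
  obtain ⟨R, hR⟩ := hA.subset_closedBall 0
  have hclosed : IsClosed (L : Set E) := AddSubgroup.isClosed_of_discrete (H := L.toAddSubgroup)
  have hfin := Metric.finite_isBounded_inter_isClosed DiscreteTopology.isDiscrete
    (Metric.isBounded_closedBall (x := -z) (r := R + ρ)) hclosed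
  refine (hfin.preimage Subtype.val_injective.injOn).subset ?_
  rintro v ⟨x, hxA, hx⟩
  refine ⟨?_, v.2⟩
  calc dist (v : E) (-z) = dist (v + z) 0 := by simp [dist_eq_norm]
    _ ≤ dist x 0 + dist x (v + z) := dist_triangle_left _ _ _ |>.trans_eq (by ring)
    _ ≤ R + ρ := add_le_add (hR hxA) (Metric.mem_ball.1 hx).le

variable [MeasurableSpace E] {μ : Measure E}

lemma tendsto_latticeSum_ballFraction [ProperSpace E] [DiscreteTopology L] {d : E → ℝ≥0∞}
    (hA : Bornology.IsBounded A)
    (hd : ∀ x, Tendsto (ballFraction μ A x) (𝓝[>] 0) (𝓝 (d x))) (z : E) :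
    Tendsto (fun ρ => latticeSum L (ballFraction μ A · ρ) z) (𝓝[>] 0)
      (𝓝 (latticeSum L d z)) := by
  set S : Finset L := (finite_setOf_nonempty_inter_ball hA z 1).toFinset
  have hfraction : ∀ᶠ ρ in 𝓝[>] (0 : ℝ), ∀ v ∉ S, ballFraction μ A (v + z) ρ = 0 := by
    filter_upwards [Ioo_mem_nhdsGT one_pos] with ρ hρ v hv
    have hempty : A ∩ Metric.ball (v + z) 1 = ∅ := by
      simpa [S, Set.not_nonempty_iff_eq_empty] using hv
    have hsub := Set.inter_subset_inter_right A (Metric.ball_subset_ball (x := v + z) hρ.2.le)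
    rw [ballFraction, Set.subset_empty_iff.1 (hsub.trans_eq hempty), measure_empty,
      ENNReal.zero_div]
  have hdensity (v : L) (hv : v ∉ S) : d (v + z) = 0 :=
    tendsto_nhds_unique (hd _)
      (tendsto_const_nhds.congr' (hfraction.mono fun ρ h => (h v hv).symm))
  rw [latticeSum, tsum_eq_sum hdensity]
  refine (tendsto_finsetSum S fun v _ => hd (v + z)).congr' ?_
  filter_upwards [hfraction] with ρ hρ
  exact (tsum_eq_sum hρ).symm

variable [BorelSpace E]

lemma measure_inter_ball_add [μ.IsAddLeftInvariant] (hA : MeasurableSet A) (v z : E) (ρ : ℝ) :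
    μ (A ∩ Metric.ball (v + z) ρ) =
      ∫⁻ w in Metric.ball z ρ, A.indicator 1 (v + w) ∂μ := by
  have h := (measurePreserving_add_left μ v).setLIntegral_comp_preimage
    (measurableSet_ball (x := v + z) (ε := ρ)) (measurable_one.indicator hA)
  rw [preimage_add_ball, add_sub_cancel_left, lintegral_indicator_one hA,
    Measure.restrict_apply hA] at h
  exact h.symm

lemma latticeSum_ballFraction [Countable L] [μ.IsAddLeftInvariant] (hA : MeasurableSet A)
    (z : E) (ρ : ℝ) :
    latticeSum L (ballFraction μ A · ρ) z =
      (∫⁻ w in Metric.ball z ρ, latticeSum L (A.indicator 1) w ∂μ) / μ (Metric.ball z ρ) := by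
  have hball (v : L) : μ (Metric.ball (v + z) ρ) = μ (Metric.ball z ρ) := by
    rw [← measure_preimage_add μ (v : E), preimage_add_ball, add_sub_cancel_left]
  simp only [latticeSum, ballFraction, hball, div_eq_mul_inv, ENNReal.tsum_mul_right,
    measure_inter_ball_add hA]
  congr 1
  exact (lintegral_tsum fun v =>
    ((measurable_one.indicator hA).comp (measurable_const_add _)).aemeasurable).symm

variable [NormedSpace ℝ E] [FiniteDimensional ℝ E]

lemma latticeSum_ballFraction_add_neg [Countable L] [μ.IsAddHaarMeasure] {c : ℝ≥0∞}
    (hA : MeasurableSet A)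
    (hc : ∀ᵐ w ∂μ, latticeSum L (A.indicator 1) w + latticeSum L (A.indicator 1) (-w) = c)
    (z : E) {ρ : ℝ} (hρ : 0 < ρ) :
    latticeSum L (ballFraction μ A · ρ) z + latticeSum L (ballFraction μ A · ρ) (-z) = c := by
  have hmeas : Measurable (latticeSum L (A.indicator 1)) :=
    measurable_latticeSum (measurable_one.indicator hA)
  have hneg : ∫⁻ w in Metric.ball (-z) ρ, latticeSum L (A.indicator 1) w ∂μ =
      ∫⁻ w in Metric.ball z ρ, latticeSum L (A.indicator 1) (-w) ∂μ := by
    have h := (Measure.measurePreserving_neg μ).setLIntegral_comp_preimage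
      (measurableSet_ball (x := -z) (ε := ρ)) hmeas
    rw [← h, Set.neg_preimage, neg_ball, neg_neg]
  have hball : μ (Metric.ball (-z) ρ) = μ (Metric.ball z ρ) := by
    rw [Measure.addHaar_ball_center, Measure.addHaar_ball_center μ z]
  rw [latticeSum_ballFraction hA, latticeSum_ballFraction hA, hneg, hball, ← ENNReal.add_div,
    ← lintegral_add_left hmeas, lintegral_congr_ae (ae_restrict_of_ae hc), setLIntegral_const,
    ENNReal.mul_div_cancel_right (Metric.measure_ball_pos μ z hρ).ne' measure_ball_lt_top.ne]

lemma latticeSum_density_add_neg [Countable L] [DiscreteTopology L] [μ.IsAddHaarMeasure]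
    {c : ℝ≥0∞} {d : E → ℝ≥0∞} (hA : MeasurableSet A) (hbdd : Bornology.IsBounded A)
    (hc : ∀ᵐ w ∂μ, latticeSum L (A.indicator 1) w + latticeSum L (A.indicator 1) (-w) = c)
    (hd : ∀ x, Tendsto (ballFraction μ A x) (𝓝[>] 0) (𝓝 (d x))) (z : E) :
    latticeSum L d z + latticeSum L d (-z) = c := by
  refine tendsto_nhds_unique ((tendsto_latticeSum_ballFraction hbdd hd z).add
    (tendsto_latticeSum_ballFraction hbdd hd (-z))) (tendsto_const_nhds.congr' ?_)
  filter_upwards [self_mem_nhdsWithin] with ρ hρ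
  exact (latticeSum_ballFraction_add_neg hA hc z hρ).symm

end Averaging

section Bond

variable {E : Type*} [NormedAddCommGroup E] [NormedSpace ℝ E] [MeasurableSpace E] [BorelSpace E]
  {L : Submodule ℤ E} [Countable L] {f : E → ℝ≥0∞} {r : E}

-- The substitution `l ↦ 1 - l` reverses the bond; it ends in `r`, a period of the lattice sum.
lemma lintegral_latticeSum_neg_smul (hf : Measurable f) (hr : r ∈ L) :
    ∫⁻ l in Set.Icc (0 : ℝ) 1, latticeSum L f (-(l • r)) =
      ∫⁻ l in Set.Icc (0 : ℝ) 1, latticeSum L f (l • r) := by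
  have hmeas : Measurable fun l : ℝ => latticeSum L f (l • r) :=
    (measurable_latticeSum hf).comp (by fun_prop)
  have hreflect := (Measure.measurePreserving_sub_left volume (1 : ℝ)).setLIntegral_comp_preimage
    (measurableSet_Icc (a := 0) (b := 1)) hmeas
  rw [Set.preimage_const_sub_Icc, sub_self, sub_zero] at hreflect
  simpa only [sub_eq_add_neg, add_smul, neg_smul, one_smul, latticeSum_add_left hr] using hreflect

lemma tsum_lintegral_bond {c : ℝ≥0∞} (hf : Measurable f) (hr : r ∈ L)
    (hc : ∀ z, latticeSum L f z + latticeSum L f (-z) = c) :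
    ∑' v : L, ∫⁻ l in Set.Icc (0 : ℝ) 1, f (v + l • r) = c / 2 := by
  have hmeas : Measurable fun l : ℝ => latticeSum L f (l • r) :=
    (measurable_latticeSum hf).comp (by fun_prop)
  have htwo : (∫⁻ l in Set.Icc (0 : ℝ) 1, latticeSum L f (l • r)) * 2 = c := by
    rw [mul_two]
    nth_rw 2 [← lintegral_latticeSum_neg_smul hf hr]
    simp only [← lintegral_add_left hmeas, hc, setLIntegral_const, Real.volume_Icc, sub_zero,
      ENNReal.ofReal_one, mul_one]
  calc ∑' v : L, ∫⁻ l in Set.Icc (0 : ℝ) 1, f (v + l • r)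
      = ∫⁻ l in Set.Icc (0 : ℝ) 1, latticeSum L f (l • r) :=
        (lintegral_tsum fun v => (hf.comp (by fun_prop)).aemeasurable).symm
    _ = c / 2 := (ENNReal.eq_div_iff two_ne_zero ENNReal.ofNat_ne_top).2 (by rwa [mul_comm])

end Bond

section Triangle

variable {E : Type*} [NormedAddCommGroup E] [NormedSpace ℝ E]

lemma basisOf_repr_sub {ι : Type*} (B : AffineBasis ι ℝ E) (i : ι) (j : {j // j ≠ i}) (x : E) :
    (B.basisOf i).repr (x - B i) j = B.coord j x := by
  have hcoord : (B.basisOf i).coord j = (B.coord j).linear := by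
    refine (B.basisOf i).ext fun k => ?_
    rw [Module.Basis.coord_apply, Module.Basis.repr_self, AffineBasis.basisOf_apply,
      AffineMap.linearMap_vsub, B.coord_apply_ne j.2, vsub_eq_sub, sub_zero]
    obtain rfl | hne := eq_or_ne j k
    · rw [Finsupp.single_eq_same, B.coord_apply_eq]
    · rw [Finsupp.single_eq_of_ne hne, B.coord_apply_ne (Subtype.coe_ne_coe.2 hne)]
  rw [← Module.Basis.coord_apply, hcoord, ← vsub_eq_sub, AffineMap.linearMap_vsub,
    B.coord_apply_ne j.2, vsub_eq_sub, sub_zero]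

lemma sub_mem_fundamentalDomain_basisOf_iff {ι : Type*} (B : AffineBasis ι ℝ E) (i : ι) {x : E} :
    x - B i ∈ ZSpan.fundamentalDomain (B.basisOf i) ↔
      ∀ j, j ≠ i → B.coord j x ∈ Set.Ico 0 1 := by
  simp only [ZSpan.mem_fundamentalDomain, basisOf_repr_sub, Subtype.forall]

lemma affineMap_add_sub (g : E →ᵃ[ℝ] ℝ) (p q x : E) : g (p + q - x) = g p + g q - g x := by
  have h := g.map_vadd q (p - x)
  rw [← vsub_eq_sub, AffineMap.linearMap_vsub, vsub_eq_sub, vsub_eq_sub, vadd_eq_add,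
    vadd_eq_add] at h
  rw [add_sub_right_comm, h, add_sub_right_comm]

lemma mem_convexHull_iff_of_notMem_frontier {ι : Type*} [Finite ι] (B : AffineBasis ι ℝ E) {x : E}
    (hx : x ∉ frontier (convexHull ℝ (Set.range B))) :
    x ∈ convexHull ℝ (Set.range B) ↔ ∀ i, 0 < B.coord i x := by
  have hint : x ∈ interior (convexHull ℝ (Set.range B)) ↔ ∀ i, 0 < B.coord i x := by
    rw [B.interior_convexHull, Set.mem_ofPred_eq]
  rw [← hint]
  refine ⟨fun h => ?_, fun h => interior_subset h⟩
  by_contra hnot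
  exact hx ⟨subset_closure h, hnot⟩

lemma forall_fin_three {P : Fin 3 → Prop} : (∀ i, P i) ↔ P 0 ∧ P 1 ∧ P 2 := by
  rw [Fin.forall_fin_succ, Fin.forall_fin_two]
  rfl

variable (B : AffineBasis (Fin 3) ℝ E)

-- The parallelogram spanned at `B 0` is the union of the triangle and its reflection through the
-- midpoint of the edge from `B 1` to `B 2`.
lemma indicator_triangle_add_indicator_reflection {x : E}
    (hx : x ∉ frontier (convexHull ℝ (Set.range B)))
    (hx' : B 1 + B 2 - x ∉ frontier (convexHull ℝ (Set.range B))) :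
    (convexHull ℝ (Set.range B)).indicator (1 : E → ℝ≥0∞) x +
        (convexHull ℝ (Set.range B)).indicator 1 (B 1 + B 2 - x) =
      (ZSpan.fundamentalDomain (B.basisOf 0)).indicator 1 (x - B 0) := by
  have hsum : B.coord 0 x + B.coord 1 x + B.coord 2 x = 1 := by
    rw [← B.sum_coord_apply_eq_one x, Fin.sum_univ_three]
  have hmem : x ∈ convexHull ℝ (Set.range B) ↔
      0 < B.coord 0 x ∧ 0 < B.coord 1 x ∧ 0 < B.coord 2 x := by
    rw [mem_convexHull_iff_of_notMem_frontier B hx, forall_fin_three]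
  have hreflect : B 1 + B 2 - x ∈ convexHull ℝ (Set.range B) ↔
      B.coord 0 x < 0 ∧ B.coord 1 x < 1 ∧ B.coord 2 x < 1 := by
    rw [mem_convexHull_iff_of_notMem_frontier B hx', forall_fin_three]
    simp [affineMap_add_sub, B.coord_apply]
  have hdomain : x - B 0 ∈ ZSpan.fundamentalDomain (B.basisOf 0) ↔
      (0 ≤ B.coord 1 x ∧ B.coord 1 x < 1) ∧ 0 ≤ B.coord 2 x ∧ B.coord 2 x < 1 := by
    rw [sub_mem_fundamentalDomain_basisOf_iff, forall_fin_three]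
    simp
  by_cases hxT : x ∈ convexHull ℝ (Set.range B)
  · have hxT' : B 1 + B 2 - x ∉ convexHull ℝ (Set.range B) := by grind
    have hxP : x - B 0 ∈ ZSpan.fundamentalDomain (B.basisOf 0) := by grind
    simp [hxT, hxT', hxP]
  · have hiff : x - B 0 ∈ ZSpan.fundamentalDomain (B.basisOf 0) ↔
        B 1 + B 2 - x ∈ convexHull ℝ (Set.range B) := by
      rw [B.convexHull_eq_nonneg_coord, Set.mem_ofPred_eq, forall_fin_three] at hxT
      grind
    rw [Set.indicator_of_notMem hxT, zero_add]
    by_cases hxP : x - B 0 ∈ ZSpan.fundamentalDomain (B.basisOf 0)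
    · rw [Set.indicator_of_mem hxP, Set.indicator_of_mem (hiff.1 hxP), Pi.one_apply, Pi.one_apply]
    · rw [Set.indicator_of_notMem hxP, Set.indicator_of_notMem (mt hiff.2 hxP)]

variable [MeasurableSpace E] [BorelSpace E] {μ : Measure E} [μ.IsAddHaarMeasure]

lemma ae_indicator_triangle_add_indicator_reflection :
    ∀ᵐ x ∂μ, (convexHull ℝ (Set.range B)).indicator (1 : E → ℝ≥0∞) x +
        (convexHull ℝ (Set.range B)).indicator 1 (B 1 + B 2 - x) =
      (ZSpan.fundamentalDomain (B.basisOf 0)).indicator 1 (x - B 0) := by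
  have : FiniteDimensional ℝ E := (B.basisOf 0).finiteDimensional_of_finite
  have hfrontier : ∀ᵐ x ∂μ, x ∉ frontier (convexHull ℝ (Set.range B)) :=
    measure_eq_zero_iff_ae_notMem.1 ((convex_convexHull ℝ _).addHaar_frontier μ)
  filter_upwards [hfrontier, (Measure.measurePreserving_sub_left μ
    (B 1 + B 2)).quasiMeasurePreserving.ae hfrontier] with x hx hx'
  exact indicator_triangle_add_indicator_reflection B hx hx'

lemma measurableSet_triangle : MeasurableSet (convexHull ℝ (Set.range B)) :=
  ((Set.finite_range B).isCompact_convexHull ℝ).measurableSet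

lemma measure_fundamentalDomain_basisOf :
    μ (ZSpan.fundamentalDomain (B.basisOf 0)) = 2 * μ (convexHull ℝ (Set.range B)) := by
  have : FiniteDimensional ℝ E := (B.basisOf 0).finiteDimensional_of_finite
  have hT := measurableSet_triangle B
  have hP := ZSpan.fundamentalDomain_measurableSet (B.basisOf 0)
  have hmeas : Measurable ((convexHull ℝ (Set.range B)).indicator (1 : E → ℝ≥0∞)) :=
    measurable_one.indicator hT
  rw [two_mul]
  calc μ (ZSpan.fundamentalDomain (B.basisOf 0))
      = ∫⁻ x, (ZSpan.fundamentalDomain (B.basisOf 0)).indicator 1 (x - B 0) ∂μ := by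
        rw [lintegral_sub_right_eq_self (μ := μ) _ (B 0), lintegral_indicator_one hP]
    _ = ∫⁻ x, ((convexHull ℝ (Set.range B)).indicator 1 x +
          (convexHull ℝ (Set.range B)).indicator 1 (B 1 + B 2 - x)) ∂μ :=
        (lintegral_congr_ae (ae_indicator_triangle_add_indicator_reflection B)).symm
    _ = μ (convexHull ℝ (Set.range B)) + μ (convexHull ℝ (Set.range B)) := by
        rw [lintegral_add_left hmeas, lintegral_sub_left_eq_self,
          lintegral_indicator_one hT]

variable {L : Submodule ℤ E} [Countable L] {F : Set E}

lemma ae_latticeSum_triangle_add_neg (hB : ∀ i, B i ∈ L) (hF : IsAddFundamentalDomain L F μ)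
    (hF₀ : μ F ≠ 0) (hF_top : μ F ≠ ⊤) :
    ∀ᵐ z ∂μ, latticeSum L ((convexHull ℝ (Set.range B)).indicator 1) z +
      latticeSum L ((convexHull ℝ (Set.range B)).indicator 1) (-z) =
        2 * μ (convexHull ℝ (Set.range B)) / μ F := by
  have hspan : Submodule.span ℤ (Set.range (B.basisOf 0)) ≤ L := by
    rw [Submodule.span_le]
    rintro _ ⟨j, rfl⟩
    rw [B.basisOf_apply]
    exact L.sub_mem (hB _) (hB 0)
  have htranslates := ae_all_iff.2 fun v : L => (measurePreserving_add_left μ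
    (v : E)).quasiMeasurePreserving.ae (ae_indicator_triangle_add_indicator_reflection B)
  filter_upwards [htranslates] with z hz
  set T := convexHull ℝ (Set.range B)
  calc latticeSum L (T.indicator 1) z + latticeSum L (T.indicator 1) (-z)
      = latticeSum L (T.indicator 1) z + ∑' v : L, T.indicator 1 (B 1 + B 2 + -z - v) := by
        rw [tsum_sub_eq_latticeSum, latticeSum_add_left (L.add_mem (hB 1) (hB 2))]
    _ = ∑' v : L, (T.indicator 1 (v + z) + T.indicator 1 (B 1 + B 2 - (v + z))) := by
        rw [ENNReal.tsum_add, latticeSum]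
        congr! 4
        abel
    _ = latticeSum L ((ZSpan.fundamentalDomain (B.basisOf 0)).indicator 1) (z - B 0) := by
        simp only [hz, latticeSum, ← add_sub_assoc]
    _ = 2 * μ T / μ F := by
        rw [latticeSum_indicator_fundamentalDomain hspan hF hF₀ hF_top,
          measure_fundamentalDomain_basisOf]

lemma tsum_lintegral_density_triangle [DiscreteTopology L] (hB : ∀ i, B i ∈ L)
    (hF : IsAddFundamentalDomain L F μ) (hF₀ : μ F ≠ 0) (hF_top : μ F ≠ ⊤) {d : E → ℝ≥0∞}
    (hd : ∀ x, Tendsto (ballFraction μ (convexHull ℝ (Set.range B)) x) (𝓝[>] 0) (𝓝 (d x)))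
    {r : E} (hr : r ∈ L) :
    ∑' v : L, ∫⁻ l in Set.Icc (0 : ℝ) 1, d (v + l • r) =
      μ (convexHull ℝ (Set.range B)) / μ F := by
  have : FiniteDimensional ℝ E := (B.basisOf 0).finiteDimensional_of_finite
  have hT := measurableSet_triangle B
  have hbdd := ((Set.finite_range B).isCompact_convexHull ℝ).isBounded
  rw [tsum_lintegral_bond (measurable_of_tendsto_ballFraction hT hd) hr
    (latticeSum_density_add_neg hT hbdd
      (ae_latticeSum_triangle_add_neg B hB hF hF₀ hF_top) hd), mul_div_assoc,
    mul_comm, ENNReal.mul_div_cancel_right two_ne_zero ENNReal.ofNat_ne_top]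

end Triangle

section Density

variable {A : Set (ℝ × ℝ)} {x : ℝ × ℝ}

lemma dens_eq_toReal {d : ℝ≥0∞} (hd : Tendsto (ballFraction volume A x) (𝓝[>] 0) (𝓝 d)) :
    dens A x = d.toReal := by
  refine Tendsto.limUnder_eq ?_
  simpa only [Function.comp_def, ballFraction, ENNReal.toReal_div] using
    (ENNReal.tendsto_toReal (ne_top_of_tendsto_ballFraction hd)).comp hd

lemma tendsto_ballFraction_dens (hA : Convex ℝ A) (hclosed : IsClosed A) (x : ℝ × ℝ) :
    Tendsto (ballFraction volume A x) (𝓝[>] 0) (𝓝 (ENNReal.ofReal (dens A x))) := by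
  obtain ⟨d, hd⟩ := exists_tendsto_ballFraction (μ := volume) hA hclosed x
  rwa [dens_eq_toReal hd, ENNReal.ofReal_toReal (ne_top_of_tendsto_ballFraction hd)]

lemma dens_mem_Icc (hA : Convex ℝ A) (hclosed : IsClosed A) (x : ℝ × ℝ) :
    dens A x ∈ Set.Icc 0 1 := by
  have hd := tendsto_ballFraction_dens hA hclosed x
  refine ⟨?_, ENNReal.ofReal_le_one.1 (le_of_tendsto' hd fun _ => ballFraction_le_one)⟩
  rw [dens_eq_toReal hd]
  exact ENNReal.toReal_nonneg

lemma dens_of_notMem (hclosed : IsClosed A) (hx : x ∉ A) : dens A x = 0 := by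
  rw [dens_eq_toReal (tendsto_ballFraction_of_notMem hclosed hx), ENNReal.toReal_zero]

lemma measurable_dens (hA : Convex ℝ A) (hclosed : IsClosed A) : Measurable (dens A) := by
  have h := (measurable_of_tendsto_ballFraction hclosed.measurableSet
    (tendsto_ballFraction_dens hA hclosed)).ennreal_toReal
  simpa only [ENNReal.toReal_ofReal (dens_mem_Icc hA hclosed _).1] using h

lemma intervalIntegrable_dens (hA : Convex ℝ A) (hclosed : IsClosed A) (x r : ℝ × ℝ) :
    IntervalIntegrable (fun l : ℝ => dens A (x + l • r)) volume 0 1 := by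
  refine (intervalIntegrable_const (c := (1 : ℝ))).mono_fun
    ((measurable_dens hA hclosed).comp (by fun_prop)).aestronglyMeasurable ?_
  refine Eventually.of_forall fun l => ?_
  obtain ⟨hnonneg, hle⟩ := dens_mem_Icc hA hclosed (x + l • r)
  simpa only [Real.norm_of_nonneg hnonneg, norm_one] using hle

lemma intervalIntegral_dens_eq_toReal (hA : Convex ℝ A) (hclosed : IsClosed A) (x r : ℝ × ℝ) :
    ∫ l in (0 : ℝ)..1, dens A (x + l • r) =
      (∫⁻ l in Set.Icc (0 : ℝ) 1, ENNReal.ofReal (dens A (x + l • r))).toReal := by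
  rw [intervalIntegral.integral_of_le zero_le_one, ← integral_Icc_eq_integral_Ioc]
  exact integral_eq_lintegral_of_nonneg_ae
    (Eventually.of_forall fun l => (dens_mem_Icc hA hclosed _).1)
    ((measurable_dens hA hclosed).comp (by fun_prop)).aestronglyMeasurable

variable {ι : Type*} {s : Finset ι} {S : ι → Set (ℝ × ℝ)}

lemma dens_biUnion (hS : ∀ i ∈ s, Convex ℝ (S i)) (hclosed : ∀ i ∈ s, IsClosed (S i))
    (hdisj : (s : Set ι).Pairwise (Function.onFun (AEDisjoint volume) S)) (x : ℝ × ℝ) :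
    dens (⋃ i ∈ s, S i) x = ∑ i ∈ s, dens (S i) x := by
  have hsum := tendsto_finsetSum s fun i hi =>
    tendsto_ballFraction_dens (hS i hi) (hclosed i hi) x
  simp only [← ballFraction_biUnion (fun i hi => (hclosed i hi).nullMeasurableSet) hdisj] at hsum
  rw [dens_eq_toReal hsum, ENNReal.toReal_sum fun _ _ => ENNReal.ofReal_ne_top]
  exact Finset.sum_congr rfl fun i hi =>
    ENNReal.toReal_ofReal (dens_mem_Icc (hS i hi) (hclosed i hi) x).1

end Density

section ConvexInterior

variable {E : Type*} [NormedAddCommGroup E] [NormedSpace ℝ E] [MeasurableSpace E] [BorelSpace E]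
  [FiniteDimensional ℝ E] {μ : Measure E} [μ.IsAddHaarMeasure] {S S' : Set E}

lemma ae_mem_interior (hS : Convex ℝ S) : ∀ᵐ x ∂μ, x ∈ S → x ∈ interior S := by
  filter_upwards [measure_eq_zero_iff_ae_notMem.1 (hS.addHaar_frontier μ)] with x hfrontier hx
  by_contra hint
  exact hfrontier ⟨subset_closure hx, hint⟩

lemma aedisjoint_of_interior_inter_eq_empty (hS : Convex ℝ S) (hS' : Convex ℝ S')
    (h : interior S ∩ interior S' = ∅) : AEDisjoint μ S S' := by
  refine measure_eq_zero_iff_ae_notMem.2 ?_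
  filter_upwards [ae_mem_interior hS, ae_mem_interior hS'] with x hx hx' hmem
  exact (h ▸ ⟨hx hmem.1, hx' hmem.2⟩ : x ∈ (∅ : Set E))

end ConvexInterior

section DirectionalDerivative

variable {S : Set (ℝ × ℝ)} {y : ℝ × ℝ → ℝ × ℝ} {A : (ℝ × ℝ) →ₗ[ℝ] (ℝ × ℝ)} {c : ℝ × ℝ}

lemma Dr_eq_of_eventually_mem {x r : ℝ × ℝ} (hA : ∀ z ∈ S, y z = A z + c) (hx : x ∈ S)
    (h : ∀ᶠ t : ℝ in 𝓝[>] 0, x + t • r ∈ S) : Dr r y x = A r := by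
  have hderiv : HasDerivWithinAt (fun t : ℝ => (A x + c) + t • A r) (A r) (Set.Ioi 0) 0 := by
    simpa using (((hasDerivAt_id (0 : ℝ)).smul_const (A r)).const_add (A x + c)).hasDerivWithinAt
  refine HasDerivWithinAt.derivWithin (hderiv.congr_of_eventuallyEq ?_ ?_)
    (uniqueDiffWithinAt_Ioi 0)
  · filter_upwards [h] with t ht
    rw [hA _ ht, map_add, map_smul]
    abel
  · simp [hA x hx]

lemma ae_Dr_eq (hS : Convex ℝ S) (hA : ∀ z ∈ S, y z = A z + c) (r : ℝ × ℝ) :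
    ∀ᵐ x, x ∈ S → Dr r y x = A r := by
  filter_upwards [ae_mem_interior hS] with x hint hx
  have hcont : ContinuousAt (fun t : ℝ => x + t • r) 0 := by fun_prop
  refine Dr_eq_of_eventually_mem hA hx (eventually_nhdsWithin_of_eventually_nhds ?_)
  exact hcont (by simpa using mem_interior_iff_mem_nhds.1 (hint hx))

-- The line meets `S` in an interval, of whose points only the endpoints can be exceptional.
lemma ae_Dr_add_smul_eq (hS : Convex ℝ S) (hA : ∀ z ∈ S, y z = A z + c) (x r : ℝ × ℝ) :
    ∀ᵐ l : ℝ, x + l • r ∈ S → Dr r y (x + l • r) = A r := by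
  have hline : Convex ℝ (AffineMap.lineMap x (x + r) ⁻¹' S : Set ℝ) := hS.affine_preimage _
  filter_upwards [ae_mem_interior hline] with l hint hl
  simp only [Set.mem_preimage, AffineMap.lineMap_apply_module', add_sub_cancel_left,
    add_comm _ x] at hint
  have hcont : ContinuousAt (fun t : ℝ => l + t) 0 := by fun_prop
  refine Dr_eq_of_eventually_mem hA hl (eventually_nhdsWithin_of_eventually_nhds ?_)
  have hnear := hcont (by simpa using mem_interior_iff_mem_nhds.1 (hint hl))
  filter_upwards [hnear] with t ht
  simpa [AffineMap.lineMap_apply_module', add_smul, add_comm, add_left_comm, add_assoc] using ht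

end DirectionalDerivative

section IntegerLattice

/-- The lattice `ℤ²` as a subgroup of `ℝ²`, spanned by the standard basis so that the library's
results on lattices and their fundamental domains apply. -/
noncomputable abbrev integerLattice : Submodule ℤ (ℝ × ℝ) :=
  Submodule.span ℤ (Set.range (Module.Basis.finTwoProd ℝ))

lemma c2_injective : Function.Injective c2 := fun i j h => by
  simpa [c2, Prod.ext_iff] using h

lemma range_c2 : Set.range c2 = integerLattice := by
  ext x
  rw [SetLike.mem_coe, Module.Basis.mem_span_iff_repr_mem, Fin.forall_fin_two]
  simp only [Module.Basis.coe_finTwoProd_repr, c2, Set.mem_range, Prod.exists, Prod.ext_iff,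
    algebraMap_int_eq, eq_intCast, Matrix.cons_val_zero, Matrix.cons_val_one, exists_and_left,
    exists_and_right]

lemma c2_mem_integerLattice (i : ℤ × ℤ) : c2 i ∈ integerLattice :=
  range_c2.subset (Set.mem_range_self i)

lemma tsum_integerLattice (f : ℝ × ℝ → ℝ≥0∞) :
    ∑' v : integerLattice, f v = ∑' i : ℤ × ℤ, f (c2 i) :=
  (tsum_congr_set_coe f range_c2).symm.trans (tsum_range f c2_injective)

lemma volume_fundamentalDomain_finTwoProd :
    volume (ZSpan.fundamentalDomain (Module.Basis.finTwoProd ℝ)) = 1 := by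
  have hsquare : ZSpan.fundamentalDomain (Module.Basis.finTwoProd ℝ) =
      Set.Ico (0 : ℝ) 1 ×ˢ Set.Ico (0 : ℝ) 1 := by
    ext x
    simp [ZSpan.mem_fundamentalDomain, Fin.forall_fin_two, Set.mem_prod]
  rw [hsquare, Measure.volume_eq_prod, Measure.prod_prod, Real.volume_Ico, sub_zero,
    ENNReal.ofReal_one, mul_one]

variable {T : (ℤ × ℤ) × (ℤ × ℤ) × (ℤ × ℤ)}

lemma convex_tri : Convex ℝ (tri T) := convex_convexHull ℝ _

lemma isCompact_tri : IsCompact (tri T) := (Set.toFinite _).isCompact_convexHull ℝ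

lemma exists_affineBasis_tri (hT : AffineIndependent ℝ ![c2 T.1, c2 T.2.1, c2 T.2.2]) :
    ∃ B : AffineBasis (Fin 3) ℝ (ℝ × ℝ),
      (∀ k, B k ∈ integerLattice) ∧ convexHull ℝ (Set.range B) = tri T := by
  have htop : affineSpan ℝ (Set.range ![c2 T.1, c2 T.2.1, c2 T.2.2]) = ⊤ := by
    rw [hT.affineSpan_eq_top_iff_card_eq_finrank_add_one, Fintype.card_fin, Module.finrank_prod,
      Module.finrank_self]
  refine ⟨⟨_, hT, htop⟩, forall_fin_three.2
    ⟨c2_mem_integerLattice _, c2_mem_integerLattice _, c2_mem_integerLattice _⟩, ?_⟩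
  change convexHull ℝ (Set.range ![c2 T.1, c2 T.2.1, c2 T.2.2]) = tri T
  rw [Matrix.range_cons, Matrix.range_cons_cons_empty, Set.singleton_union, tri]

lemma tsum_lintegral_dens_tri (hT : AffineIndependent ℝ ![c2 T.1, c2 T.2.1, c2 T.2.2])
    (r : ℤ × ℤ) :
    ∑' i : ℤ × ℤ, ∫⁻ l in Set.Icc (0 : ℝ) 1, ENNReal.ofReal (dens (tri T) (c2 i + l • c2 r)) =
      volume (tri T) := by
  obtain ⟨B, hB, hBT⟩ := exists_affineBasis_tri hT
  have hdens := tendsto_ballFraction_dens (convex_tri (T := T)) isCompact_tri.isClosed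
  have : Countable integerLattice := instCountable_of_discrete_submodule (E := ℝ × ℝ) _
  have hunit := volume_fundamentalDomain_finTwoProd
  rw [← hBT] at hdens
  calc ∑' i : ℤ × ℤ, ∫⁻ l in Set.Icc (0 : ℝ) 1, ENNReal.ofReal (dens (tri T) (c2 i + l • c2 r))
      = ∑' v : integerLattice,
          ∫⁻ l in Set.Icc (0 : ℝ) 1, ENNReal.ofReal (dens (tri T) (v + l • c2 r)) :=
        (tsum_integerLattice fun v =>
          ∫⁻ l in Set.Icc (0 : ℝ) 1, ENNReal.ofReal (dens (tri T) (v + l • c2 r))).symm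
    _ = volume (tri T) := by
        rw [← hBT, tsum_lintegral_density_triangle B hB
          (ZSpan.isAddFundamentalDomain (Module.Basis.finTwoProd ℝ) volume)
          (hunit.trans_ne one_ne_zero) (hunit.trans_ne ENNReal.one_ne_top) hdens
          (c2_mem_integerLattice r), hunit, div_one]

lemma hasSum_integral_dens_tri (hT : AffineIndependent ℝ ![c2 T.1, c2 T.2.1, c2 T.2.2])
    (r : ℤ × ℤ) :
    HasSum (fun i : ℤ × ℤ => ∫ l in (0 : ℝ)..1, dens (tri T) (c2 i + l • c2 r))
      (volume.real (tri T)) := by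
  have hbonds := tsum_lintegral_dens_tri hT r
  have hne_top := hbonds.trans_ne isCompact_tri.measure_lt_top.ne
  simp only [intervalIntegral_dens_eq_toReal convex_tri isCompact_tri.isClosed]
  rw [measureReal_def, ← hbonds, ENNReal.tsum_toReal_eq (ENNReal.ne_top_of_tsum_ne_top hne_top)]
  exact ENNReal.hasSum_toReal hne_top

end IntegerLattice

section Piecewise

variable {ι : Type*} {s : Finset ι} {S : ι → Set (ℝ × ℝ)} {y : ℝ × ℝ → ℝ × ℝ}
  {A : ι → (ℝ × ℝ) →ₗ[ℝ] (ℝ × ℝ)} {c : ι → ℝ × ℝ}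
  {F : Type*} [NormedAddCommGroup F] [NormedSpace ℝ F]

lemma intervalIntegral_dens_biUnion_smul_Dr [CompleteSpace F] (φ : ℝ × ℝ → F)
    (hS : ∀ i ∈ s, Convex ℝ (S i)) (hclosed : ∀ i ∈ s, IsClosed (S i))
    (hdisj : (s : Set ι).Pairwise (Function.onFun (AEDisjoint volume) S))
    (hA : ∀ i ∈ s, ∀ z ∈ S i, y z = A i z + c i) (x r : ℝ × ℝ) :
    ∫ l in (0 : ℝ)..1, dens (⋃ i ∈ s, S i) (x + l • r) • φ (Dr r y (x + l • r)) =
      ∑ i ∈ s, (∫ l in (0 : ℝ)..1, dens (S i) (x + l • r)) • φ (A i r) := by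
  simp only [← intervalIntegral.integral_smul_const]
  rw [← intervalIntegral.integral_finsetSum fun i hi =>
    (intervalIntegrable_dens (hS i hi) (hclosed i hi) x r).smul_continuousOn continuousOn_const]
  refine intervalIntegral.integral_congr_ae ?_
  have hDr : ∀ᵐ l : ℝ, ∀ i ∈ s, x + l • r ∈ S i → Dr r y (x + l • r) = A i r :=
    (ae_ball_iff s.countable_toSet).2 fun i hi => ae_Dr_add_smul_eq (hS i hi) (hA i hi) x r
  filter_upwards [hDr] with l hl _
  rw [dens_biUnion hS hclosed hdisj, Finset.sum_smul]
  refine Finset.sum_congr rfl fun i hi => ?_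
  by_cases hx : x + l • r ∈ S i
  · rw [hl i hi hx]
  · rw [dens_of_notMem (hclosed i hi) hx, zero_smul, zero_smul]

lemma restrict_biUnion_finset_ae {X : Type*} [MeasurableSpace X] {μ : Measure X} {S : ι → Set X}
    (hS : ∀ i ∈ s, NullMeasurableSet (S i) μ)
    (hdisj : (s : Set ι).Pairwise (Function.onFun (AEDisjoint μ) S)) :
    μ.restrict (⋃ i ∈ s, S i) = ∑ i ∈ s, μ.restrict (S i) := by
  ext t ht
  rw [Measure.restrict_apply ht, Set.inter_iUnion₂, measure_biUnion_finset₀,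
    Measure.finsetSum_apply]
  · simp only [Measure.restrict_apply ht]
  · exact fun i hi j hj hne => (hdisj hi hj hne).mono Set.inter_subset_right Set.inter_subset_right
  · exact fun i hi => ht.nullMeasurableSet.inter (hS i hi)

lemma setIntegral_biUnion_Dr [CompleteSpace F] (φ : ℝ × ℝ → F) (hS : ∀ i ∈ s, Convex ℝ (S i))
    (hS_top : ∀ i ∈ s, volume (S i) ≠ ⊤)
    (hdisj : (s : Set ι).Pairwise (Function.onFun (AEDisjoint volume) S))
    (hA : ∀ i ∈ s, ∀ z ∈ S i, y z = A i z + c i) (r : ℝ × ℝ) :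
    ∫ x in ⋃ i ∈ s, S i, φ (Dr r y x) = ∑ i ∈ s, volume.real (S i) • φ (A i r) := by
  have hmeas : ∀ i ∈ s, NullMeasurableSet (S i) := fun i hi => (hS i hi).nullMeasurableSet _
  have hconst : ∀ i ∈ s, (fun x => φ (Dr r y x)) =ᵐ[volume.restrict (S i)] fun _ => φ (A i r) := by
    intro i hi
    filter_upwards [ae_restrict_mem₀ (hmeas i hi),
      ae_restrict_of_ae (ae_Dr_eq (hS i hi) (hA i hi) r)] with x hx hDr
    rw [hDr hx]
  rw [restrict_biUnion_finset_ae hmeas hdisj, integral_finsetSum_measure]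
  · exact Finset.sum_congr rfl fun i hi => by
      rw [integral_congr_ae (hconst i hi), setIntegral_const]
  · exact fun i hi => (integrableOn_const (hS_top i hi)).congr (hconst i hi).symm

end Piecewise

end BondDensity

open BondDensity

theorem bond_sum_eq_integral_2d_general {F : Type*} [NormedAddCommGroup F] [NormedSpace ℝ F]
    [CompleteSpace F] (𝒯 : Finset ((ℤ × ℤ) × (ℤ × ℤ) × (ℤ × ℤ)))
    (hnd : ∀ T ∈ 𝒯, AffineIndependent ℝ ![c2 T.1, c2 T.2.1, c2 T.2.2])
    (hdisj : ∀ T ∈ 𝒯, ∀ T' ∈ 𝒯, T ≠ T' → interior (tri T) ∩ interior (tri T') = ∅)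
    (r : ℤ × ℤ) (y : ℝ × ℝ → ℝ × ℝ)
    (haff : ∀ T ∈ 𝒯, ∃ A : (ℝ × ℝ) →ₗ[ℝ] (ℝ × ℝ), ∃ c : ℝ × ℝ,
      ∀ x ∈ tri T, y x = A x + c)
    (φ : ℝ × ℝ → F) :
    HasSum (fun i : ℤ × ℤ => ∫ l in (0 : ℝ)..1,
        dens (⋃ T ∈ 𝒯, tri T) (c2 i + l • c2 r) • φ (Dr (c2 r) y (c2 i + l • c2 r)))
      (∫ x in ⋃ T ∈ 𝒯, tri T, φ (Dr (c2 r) y x)) := by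
  choose! A c hA using haff
  have hconvex : ∀ T ∈ 𝒯, Convex ℝ (tri T) := fun _ _ => convex_tri
  have hdisjoint : (𝒯 : Set _).Pairwise (Function.onFun (AEDisjoint volume) tri) :=
    fun T hT T' hT' hne =>
      aedisjoint_of_interior_inter_eq_empty convex_tri convex_tri (hdisj T hT T' hT' hne)
  rw [setIntegral_biUnion_Dr φ hconvex (fun _ _ => isCompact_tri.measure_lt_top.ne) hdisjoint hA]
  simp only [intervalIntegral_dens_biUnion_smul_Dr φ hconvex
    (fun _ _ => isCompact_tri.isClosed) hdisjoint hA]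
  exact hasSum_sum fun T hT => (hasSum_integral_dens_tri (hnd T hT) r).smul_const _

/-- Let `Ω_c ⊂ ℝ²` be a polygon triangulated by nondegenerate triangles with vertices in
`ℤ²`, let `r ∈ ℤ² \ {0}`, let `y` be continuous and piecewise affine on the triangulation,
and let `φ` be continuous.  Then
`∑_{i∈ℤ²} ⨍_{(i,i+r)} χ_{Ω_c} φ(D_r y) db = ∫_{Ω_c} φ(D_r y) dΩ`. -/
theorem bond_sum_eq_integral_2d
    (𝒯 : Finset ((ℤ × ℤ) × (ℤ × ℤ) × (ℤ × ℤ)))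
    (Ωc : Set (ℝ × ℝ)) (hΩc : Ωc = ⋃ T ∈ 𝒯, tri T)
    (hnd : ∀ T ∈ 𝒯, AffineIndependent ℝ ![c2 T.1, c2 T.2.1, c2 T.2.2])
    (hdisj : ∀ T ∈ 𝒯, ∀ T' ∈ 𝒯, T ≠ T' → interior (tri T) ∩ interior (tri T') = ∅)
    (r : ℤ × ℤ) (hr : r ≠ 0)
    (y : ℝ × ℝ → ℝ × ℝ) (hy : Continuous y)
    (haff : ∀ T ∈ 𝒯, ∃ A : (ℝ × ℝ) →ₗ[ℝ] (ℝ × ℝ), ∃ c : ℝ × ℝ,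
      ∀ x ∈ tri T, y x = A x + c)
    (φ : ℝ × ℝ → ℝ) (hφ : Continuous φ) :
    ∑' i : ℤ × ℤ,
        ∫ l in (0:ℝ)..1,
          dens Ωc (c2 i + l • c2 r) * φ (Dr (c2 r) y (c2 i + l • c2 r))
      = ∫ x in Ωc, φ (Dr (c2 r) y x) := by
  subst hΩc
  exact (bond_sum_eq_integral_2d_general 𝒯 hnd hdisj r y haff φ).tsum_eq
end

section
/- In 2D, the ECC continuum part admits the effective-area form: ∑_{b∈B, b⊂Ω_c} c_b(y) = ∑_{T∈T} ∑_{r∈R} Ω_{T,r} φ(D_r y|_T), where Ω_{T,r} := |T| − ∑_{(i,i+r)∈B, (i,i+r)⊄Ω_c} ⨍_{(i,i+r)} χ_T db; consequently E^ecc(y) = ∑_{b∈B, b⊄Ω_c} e_b(y) + ∑_{T∈T} ∑_{r∈R} Ω_{T,r} φ(D_r y|_T). -/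
open MeasureTheory Filter
open scoped Classical

/-!
The heart of the matter is the bond-density lemma: for each direction `r`, the mean densities
`⨍ χ_T db` over all lattice bonds `(i, i + r)` add up to `|T|`. A lattice triangle and its
reflection through the midpoint of an edge tile, up to a null set, a half-open parallelogram `P`,
which is a fundamental domain of a sublattice of `ℤ²`. Hence the sets `P ∩ B_ρ(i + z)`, `i ∈ ℤ²`,
have total area `|P| |B_ρ|`; dividing by `|B_ρ|` and letting `ρ → 0` gives `∑ i, χ_P(i + z) = |P|`,
and averaging over `z ∈ [0, r]` yields the lemma for `P`. The reflection permutes the bonds in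
direction `r` up to orientation, so the triangle and its mirror image contribute equally, namely
`|P| / 2 = |T|` each.

On a bond, `χ_{Ω_c} = ∑ T, χ_T`, and at almost every point with `χ_T ≠ 0` the bond runs inside `T`
on both sides of the point, so that `D_r y` has its value on `T` there. Summing over the continuum
bonds, i.e. over all bonds minus the remaining ones, leaves the effective area `Ω_{T,r}`.
-/

section

open Set Metric Topology Pointwise

section BallFraction

variable {X : Type*} [PseudoMetricSpace X] [MeasurableSpace X] {μ : Measure X} {A B : Set X} {x : X}

/-- The fraction of the ball of radius `ρ` around `x` that is occupied by `A`. -/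
noncomputable def ballFraction (μ : Measure X) (A : Set X) (x : X) (ρ : ℝ) : ℝ :=
  μ.real (A ∩ ball x ρ) / μ.real (ball x ρ)

/-- `A` has density `a` at `x`: the limit that `dens` merely names through `limUnder` exists and
equals `a`. -/
def HasDensity (μ : Measure X) (A : Set X) (x : X) (a : ℝ) : Prop :=
  Tendsto (ballFraction μ A x) (𝓝[>] 0) (𝓝 a)

lemma ballFraction_congr_ae (h : A =ᵐ[μ] B) : ballFraction μ A = ballFraction μ B := by
  ext x ρ
  rw [ballFraction, measureReal_congr (h.inter (ae_eq_refl (ball x ρ))), ballFraction]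

lemma ballFraction_eq_zero_of_disjoint {ρ : ℝ} (h : Disjoint A (ball x ρ)) :
    ballFraction μ A x ρ = 0 := by
  rw [ballFraction, h.inter_eq, measureReal_empty, zero_div]

lemma hasDensity_zero_of_disjoint_ball {ε : ℝ} (hε : 0 < ε) (h : Disjoint A (ball x ε)) :
    HasDensity μ A x 0 := by
  refine tendsto_const_nhds.congr' ?_
  filter_upwards [Ioo_mem_nhdsGT hε] with ρ hρ
  exact (ballFraction_eq_zero_of_disjoint (h.mono_right (ball_subset_ball hρ.2.le))).symm

lemma hasDensity_zero_of_notMem_closure (hx : x ∉ closure A) : HasDensity μ A x 0 := by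
  obtain ⟨ε, hε, hdist⟩ : ∃ ε > 0, ∀ z ∈ A, ε ≤ dist x z := by
    simpa [Metric.mem_closure_iff] using hx
  refine hasDensity_zero_of_disjoint_ball hε (disjoint_left.2 fun z hz hzε => ?_)
  exact (hdist z hz).not_gt (mem_ball'.1 hzε)

lemma measurable_ballFraction [OpensMeasurableSpace X] [SecondCountableTopology X] [SFinite μ]
    (hA : MeasurableSet A) (ρ : ℝ) : Measurable fun x => ballFraction μ A x ρ := by
  have measurable_inter_ball {A : Set X} (hA : MeasurableSet A) :
      Measurable fun x => μ.real (A ∩ ball x ρ) :=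
    (measurable_measure_prodMk_left ((measurable_snd hA).inter
      (measurableSet_lt (measurable_snd.dist measurable_fst) measurable_const))).ennreal_toReal
  have measurable_ball : Measurable fun x => μ.real (ball x ρ) := by
    simpa only [univ_inter] using measurable_inter_ball MeasurableSet.univ
  exact (measurable_inter_ball hA).div measurable_ball

section Proper

variable [ProperSpace X] [IsFiniteMeasureOnCompacts μ]

lemma measure_inter_ball_ne_top (A : Set X) (x : X) (ρ : ℝ) : μ (A ∩ ball x ρ) ≠ ⊤ :=
  measure_ne_top_of_subset inter_subset_right measure_ball_lt_top.ne

lemma ballFraction_mem_Icc (A : Set X) (x : X) (ρ : ℝ) : ballFraction μ A x ρ ∈ Icc 0 1 :=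
  ⟨div_nonneg measureReal_nonneg measureReal_nonneg,
    div_le_one_of_le₀ (measureReal_mono inter_subset_right measure_ball_lt_top.ne)
      measureReal_nonneg⟩

lemma HasDensity.mem_Icc {a : ℝ} (h : HasDensity μ A x a) : a ∈ Icc 0 1 :=
  isClosed_Icc.mem_of_tendsto h (Eventually.of_forall (ballFraction_mem_Icc A x))

variable [OpensMeasurableSpace X]

lemma HasDensity.union {a b : ℝ} (hA : HasDensity μ A x a) (hB : HasDensity μ B x b)
    (hBm : NullMeasurableSet B μ) (hAB : AEDisjoint μ A B) :
    HasDensity μ (A ∪ B) x (a + b) := by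
  refine (Tendsto.add hA hB).congr fun ρ => ?_
  rw [ballFraction, ballFraction, ballFraction, union_inter_distrib_right, measureReal_union₀
    (hBm.inter measurableSet_ball.nullMeasurableSet)
    (hAB.mono inter_subset_left inter_subset_left)
    (measure_inter_ball_ne_top A x ρ) (measure_inter_ball_ne_top B x ρ), add_div]

lemma HasDensity.biUnion {ι : Type*} {s : Finset ι} {A : ι → Set X} {a : ι → ℝ}
    (hA : ∀ i ∈ s, HasDensity μ (A i) x (a i)) (hAm : ∀ i ∈ s, NullMeasurableSet (A i) μ)
    (hdisj : (s : Set ι).Pairwise (Function.onFun (AEDisjoint μ) A)) :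
    HasDensity μ (⋃ i ∈ s, A i) x (∑ i ∈ s, a i) := by
  refine (tendsto_finsetSum s hA).congr fun ρ => ?_
  simp only [ballFraction]
  rw [← Finset.sum_div, iUnion₂_inter, measureReal_biUnion_finset₀
    (fun i hi j hj hij => (hdisj hi hj hij).mono inter_subset_left inter_subset_left)
    (fun i hi => (hAm i hi).inter measurableSet_ball.nullMeasurableSet)
    (fun i _ => measure_inter_ball_ne_top (A i) x ρ)]

end Proper

end BallFraction

section Convex

variable {E : Type*} [NormedAddCommGroup E] [NormedSpace ℝ E] [MeasurableSpace E] [BorelSpace E]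
  [FiniteDimensional ℝ E] {μ : Measure E} [μ.IsAddHaarMeasure] {A B : Set E} {x : E}

lemma measureReal_ball_mul (x : E) {k : ℝ} (hk : 0 < k) (ρ : ℝ) :
    μ.real (ball x (k * ρ)) = k ^ Module.finrank ℝ E * μ.real (ball x ρ) := by
  rw [measureReal_def, Measure.addHaar_ball_mul_of_pos μ x hk, ENNReal.toReal_mul,
    ENNReal.toReal_ofReal (by positivity), ← measureReal_def, Measure.addHaar_real_ball_center μ x]

-- The homothety centred at `x` that shrinks `ball x σ` to `ball x ρ` maps `A` into itself.
lemma antitoneOn_ballFraction (hA : StarConvex ℝ x A) :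
    AntitoneOn (ballFraction μ A x) (Ioi 0) := by
  intro ρ (hρ : 0 < ρ) σ (hσ : 0 < σ) hρσ
  obtain ⟨k, hk0, hk1, rfl⟩ : ∃ k, 0 < k ∧ k ≤ 1 ∧ ρ = k * σ :=
    ⟨ρ / σ, div_pos hρ hσ, (div_le_one hσ).2 hρσ, (div_mul_cancel₀ ρ hσ.ne').symm⟩
  have image_subset :
      AffineMap.homothety x k '' (A ∩ ball x σ) ⊆ A ∩ ball x (k * σ) := by
    rintro _ ⟨z, ⟨hzA, hzσ⟩, rfl⟩
    constructor
    · rw [AffineMap.homothety_apply, vsub_eq_sub, vadd_eq_add, add_comm]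
      exact hA.add_smul_sub_mem hzA hk0.le hk1
    · rw [mem_ball, dist_homothety_center, Real.norm_of_nonneg hk0.le, dist_comm]
      exact mul_lt_mul_of_pos_left hzσ hk0
  have measure_le :
      k ^ Module.finrank ℝ E * μ.real (A ∩ ball x σ) ≤ μ.real (A ∩ ball x (k * σ)) := by
    have := measureReal_mono (μ := μ) image_subset (measure_inter_ball_ne_top A x _)
    rwa [measureReal_def, Measure.addHaar_image_homothety, ENNReal.toReal_mul,
      ENNReal.toReal_ofReal (abs_nonneg _), abs_of_pos (by positivity)] at this
  calc ballFraction μ A x σ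
      = k ^ Module.finrank ℝ E * μ.real (A ∩ ball x σ) /
          (k ^ Module.finrank ℝ E * μ.real (ball x σ)) :=
        (mul_div_mul_left _ _ (by positivity)).symm
    _ ≤ ballFraction μ A x (k * σ) := by
        rw [ballFraction, measureReal_ball_mul x hk0]
        gcongr

lemma exists_hasDensity_of_convex (hA : Convex ℝ A) (x : E) : ∃ a, HasDensity μ A x a := by
  by_cases hx : x ∈ closure A
  · have h := (antitoneOn_ballFraction (μ := μ) (hA.closure.starConvex hx)).tendsto_nhdsGT
      ⟨1, forall_mem_image.2 fun ρ _ => (ballFraction_mem_Icc _ x ρ).2⟩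
    rw [ballFraction_congr_ae (closure_ae_eq_of_null_frontier (hA.addHaar_frontier μ))] at h
    exact ⟨_, h⟩
  · exact ⟨0, hasDensity_zero_of_notMem_closure hx⟩

lemma aedisjoint_of_disjoint_interior (hA : Convex ℝ A) (hB : Convex ℝ B)
    (h : Disjoint (interior A) (interior B)) : AEDisjoint μ A B :=
  h.aedisjoint.congr (interior_ae_eq_of_null_frontier (hA.addHaar_frontier μ)).symm
    (interior_ae_eq_of_null_frontier (hB.addHaar_frontier μ)).symm

lemma measureReal_preimage_sub_left (c : E) (s : Set E) : μ.real ((c - ·) ⁻¹' s) = μ.real s :=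
  congrArg ENNReal.toReal ((Measure.measurePreserving_sub_left μ c).measure_preimage_emb
    (MeasurableEquiv.subLeft c).measurableEmbedding s)

lemma ballFraction_preimage_sub_left (c : E) (A : Set E) (x : E) (ρ : ℝ) :
    ballFraction μ ((c - ·) ⁻¹' A) x ρ = ballFraction μ A (c - x) ρ := by
  have preimage_ball : (c - ·) ⁻¹' ball (c - x) ρ = ball x ρ := by
    ext z
    simp only [mem_preimage, mem_ball, dist_sub_left]
  rw [ballFraction, ballFraction, ← preimage_ball, ← preimage_inter,
    measureReal_preimage_sub_left, measureReal_preimage_sub_left]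

end Convex

section Dens

variable {A : Set (ℝ × ℝ)}

lemma HasDensity.dens_eq {x : ℝ × ℝ} {a : ℝ} (h : HasDensity volume A x a) : dens A x = a :=
  Tendsto.limUnder_eq h

lemma hasDensity_dens (hA : Convex ℝ A) (x : ℝ × ℝ) : HasDensity volume A x (dens A x) := by
  obtain ⟨a, ha⟩ := exists_hasDensity_of_convex (μ := volume) hA x
  rwa [ha.dens_eq]

lemma dens_eq_zero_of_notMem_closure {x : ℝ × ℝ} (hx : x ∉ closure A) : dens A x = 0 :=
  (hasDensity_zero_of_notMem_closure hx).dens_eq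

lemma dens_biUnion {ι : Type*} (s : Finset ι) {A : ι → Set (ℝ × ℝ)}
    (hA : ∀ i ∈ s, Convex ℝ (A i))
    (hdisj : (s : Set ι).Pairwise fun i j => Disjoint (interior (A i)) (interior (A j)))
    (x : ℝ × ℝ) : dens (⋃ i ∈ s, A i) x = ∑ i ∈ s, dens (A i) x :=
  (HasDensity.biUnion (μ := volume) (fun i hi => hasDensity_dens (hA i hi) x)
    (fun i hi => (hA i hi).nullMeasurableSet volume) fun i hi j hj hij =>
      aedisjoint_of_disjoint_interior (hA i hi) (hA j hj) (hdisj hi hj hij)).dens_eq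

lemma measurable_dens (hA : Convex ℝ A) : Measurable (dens A) := by
  refine measurable_of_tendsto_metrizable (f := fun (n : ℕ) x =>
    ballFraction volume (closure A) x (1 / ((n : ℝ) + 1)))
    (fun n => measurable_ballFraction isClosed_closure.measurableSet _) ?_
  rw [ballFraction_congr_ae (closure_ae_eq_of_null_frontier (hA.addHaar_frontier volume)),
    tendsto_pi_nhds]
  exact fun x => (hasDensity_dens hA x).comp (tendsto_nhdsWithin_iff.2
    ⟨tendsto_one_div_add_atTop_nhds_zero_nat,
      Eventually.of_forall fun _ => mem_Ioi.2 Nat.one_div_pos_of_nat⟩)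

lemma intervalIntegrable_dens (hA : Convex ℝ A) (p v : ℝ × ℝ) (s t : ℝ) :
    IntervalIntegrable (fun l : ℝ => dens A (p + l • v)) volume s t := by
  refine (intervalIntegrable_const (c := (1 : ℝ))).mono_fun'
    ((measurable_dens hA).comp (by fun_prop)).aestronglyMeasurable
    (Eventually.of_forall fun l => ?_)
  obtain ⟨h0, h1⟩ := (hasDensity_dens hA (p + l • v)).mem_Icc
  simpa [abs_of_nonneg h0] using h1

end Dens

section FundamentalDomain

variable {Γ α : Type*} [AddGroup Γ] [Countable Γ] [AddAction Γ α] [MeasurableSpace α]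
  {μ : Measure α} [MeasurableConstVAdd Γ α] [VAddInvariantMeasure Γ α μ] {Λ : AddSubgroup Γ}
  {P D : Set α}

/-- Decomposition of a group into the left cosets of a subgroup, the representatives being chosen
by `Quotient.out`. -/
noncomputable def quotientProdEquiv (Λ : AddSubgroup Γ) : (Γ ⧸ Λ) × Λ ≃ Γ where
  toFun x := x.1.out + x.2
  invFun g := (g, ⟨-(g : Γ ⧸ Λ).out + g, QuotientAddGroup.eq.1 (QuotientAddGroup.out_eq' _)⟩)
  left_inv := by
    rintro ⟨q, k⟩
    have mk_eq : ((q.out + k : Γ) : Γ ⧸ Λ) = q := by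
      rw [QuotientAddGroup.mk_add_of_mem _ k.2, QuotientAddGroup.out_eq']
    ext <;> simp [mk_eq]
  right_inv g := add_neg_cancel_left _ g

lemma tsum_measure_inter_vadd (hP : IsAddFundamentalDomain Λ P μ) (s : Set α) :
    ∑' g : Γ, μ (P ∩ (g +ᵥ s)) = ENat.card (Γ ⧸ Λ) * μ s := by
  let e : (Γ ⧸ Λ) × Λ ≃ Γ := (quotientProdEquiv Λ).trans (Equiv.neg Γ)
  have e_vadd (q : Γ ⧸ Λ) (k : Λ) : e (q, k) +ᵥ s = -k +ᵥ (-q.out +ᵥ s) := by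
    change -(q.out + (k : Γ)) +ᵥ s = (-k : Γ) +ᵥ (-q.out +ᵥ s)
    rw [neg_add_rev, add_vadd]
  calc ∑' g : Γ, μ (P ∩ (g +ᵥ s))
      = ∑' (q : Γ ⧸ Λ) (k : Λ), μ (P ∩ (e (q, k) +ᵥ s)) := by
        rw [← e.tsum_eq, ENNReal.tsum_prod']
    _ = ∑' q : Γ ⧸ Λ, μ (-q.out +ᵥ s) := by
        congr with q
        simp only [e_vadd, inter_comm P]
        rw [hP.measure_eq_tsum]
        exact (Equiv.neg Λ).tsum_eq fun k => μ ((k +ᵥ (-q.out +ᵥ s)) ∩ P)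
    _ = ENat.card (Γ ⧸ Λ) * μ s := by
        simp only [measure_vadd, ENNReal.tsum_const]

lemma tsum_measure_inter_vadd_mul_measure (hP : IsAddFundamentalDomain Λ P μ)
    (hD : IsAddFundamentalDomain Γ D μ) (s : Set α) :
    (∑' g : Γ, μ (P ∩ (g +ᵥ s))) * μ D = μ P * μ s := by
  rw [hD.measure_eq_tsum' P, tsum_measure_inter_vadd hP, tsum_measure_inter_vadd hP]
  ring

end FundamentalDomain

section Parallelogram

lemma affineMap_add_sub {k E F : Type*} [Ring k] [AddCommGroup E] [Module k E] [AddCommGroup F]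
    [Module k F] (f : E →ᵃ[k] F) (p q x : E) : f (p + q - x) = f p + f q - f x := by
  rw [f.decomp]
  simp only [Pi.add_apply, map_add, map_sub]
  abel

section Module

variable {E : Type*} [AddCommGroup E] [Module ℝ E] (b : AffineBasis (Fin 3) ℝ E)

/-- The half-open parallelogram with corner `b 0` and edges `b 1 - b 0`, `b 2 - b 0`. -/
def parallelogram : Set E :=
  {x | b.coord 1 x ∈ Ico 0 1 ∧ b.coord 2 x ∈ Ico 0 1}

lemma mem_convexHull_range_iff_coord {x : E} : x ∈ convexHull ℝ (range b) ↔
    0 ≤ b.coord 1 x ∧ 0 ≤ b.coord 2 x ∧ b.coord 1 x + b.coord 2 x ≤ 1 := by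
  have sum_coord := b.sum_coord_apply_eq_one x
  rw [Fin.sum_univ_three] at sum_coord
  rw [b.convexHull_eq_nonneg_coord, mem_ofPred_eq, Fin.forall_fin_succ, Fin.forall_fin_two]
  change 0 ≤ b.coord 0 x ∧ 0 ≤ b.coord 1 x ∧ 0 ≤ b.coord 2 x ↔ _
  grind

lemma sub_mem_convexHull_range_iff_coord {x : E} : b 1 + b 2 - x ∈ convexHull ℝ (range b) ↔
    b.coord 1 x ≤ 1 ∧ b.coord 2 x ≤ 1 ∧ 1 ≤ b.coord 1 x + b.coord 2 x := by
  rw [mem_convexHull_range_iff_coord, affineMap_add_sub, affineMap_add_sub]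
  simp only [AffineBasis.coord_apply_eq, ne_eq, Fin.reduceEq, not_false_eq_true,
    AffineBasis.coord_apply_ne, add_zero, sub_nonneg, zero_add, and_congr_right_iff]
  grind

lemma convex_parallelogram : Convex ℝ (parallelogram b) :=
  ((convex_Ico 0 1).affine_preimage (b.coord 1)).inter
    ((convex_Ico 0 1).affine_preimage (b.coord 2))

lemma parallelogram_subset : parallelogram b ⊆
    convexHull ℝ (range b) ∪ (b 1 + b 2 - ·) ⁻¹' convexHull ℝ (range b) := by
  rintro x ⟨⟨_, _⟩, _, _⟩
  rw [mem_union, mem_preimage, sub_mem_convexHull_range_iff_coord,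
    mem_convexHull_range_iff_coord]
  grind

end Module

variable {E : Type*} [NormedAddCommGroup E] [NormedSpace ℝ E] (b : AffineBasis (Fin 3) ℝ E)

lemma isBounded_parallelogram : Bornology.IsBounded (parallelogram b) := by
  have compact : IsCompact (convexHull ℝ (range b)) := (finite_range b).isCompact_convexHull ℝ
  refine (compact.union ?_).isBounded.subset (parallelogram_subset b)
  exact (Homeomorph.subLeft (b 1 + b 2)).isCompact_preimage.2 compact

variable [MeasurableSpace E] [BorelSpace E] [FiniteDimensional ℝ E] (μ : Measure E)
  [μ.IsAddHaarMeasure]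

lemma addHaar_setOf_coord_eq {ι : Type*} [Nontrivial ι] (b : AffineBasis ι ℝ E) (i : ι) (c : ℝ) :
    μ {x | b.coord i x = c} = 0 := by
  let S : AffineSubspace ℝ E := (AffineSubspace.mk' c ⊥).comap (b.coord i)
  have coe_S : (S : Set E) = {x | b.coord i x = c} := by
    ext x
    simp [S, AffineSubspace.mem_mk', sub_eq_zero]
  rw [← coe_S]
  refine Measure.addHaar_affineSubspace μ S fun hS => ?_
  obtain ⟨j, hj⟩ := exists_ne i
  have coord_eq (x : E) : b.coord i x = c := by
    rw [← mem_ofPred_eq (p := fun x => b.coord i x = c), ← coe_S, hS]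
    trivial
  exact zero_ne_one ((b.coord_apply_ne hj.symm).symm.trans
    ((coord_eq (b j)).trans ((coord_eq (b i)).symm.trans (b.coord_apply_eq i))))

lemma ae_coord_ne {ι : Type*} [Nontrivial ι] (b : AffineBasis ι ℝ E) (i : ι) (c : ℝ) :
    ∀ᵐ x ∂μ, b.coord i x ≠ c := by
  rw [ae_iff]
  simpa using addHaar_setOf_coord_eq μ b i c

lemma aedisjoint_convexHull_reflection :
    AEDisjoint μ (convexHull ℝ (range b)) ((b 1 + b 2 - ·) ⁻¹' convexHull ℝ (range b)) := by
  refine measure_mono_null (fun x hx => ?_) (addHaar_setOf_coord_eq μ b 0 0)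
  rw [mem_inter_iff, mem_preimage, mem_convexHull_range_iff_coord,
    sub_mem_convexHull_range_iff_coord] at hx
  have sum_coord := b.sum_coord_apply_eq_one x
  rw [Fin.sum_univ_three] at sum_coord
  rw [mem_ofPred_eq]
  linarith

lemma union_reflection_ae_eq_parallelogram :
    (convexHull ℝ (range b) ∪ (b 1 + b 2 - ·) ⁻¹' convexHull ℝ (range b) : Set E) =ᵐ[μ]
      parallelogram b := by
  refine eventuallyEq_set.2 ?_
  filter_upwards [ae_coord_ne μ b 1 1, ae_coord_ne μ b 2 1] with x h1 h2
  refine ⟨fun hx => ?_, fun hx => parallelogram_subset b hx⟩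
  rw [mem_union, mem_preimage, sub_mem_convexHull_range_iff_coord,
    mem_convexHull_range_iff_coord] at hx
  change (_ ∧ _) ∧ (_ ∧ _)
  grind

lemma nullMeasurableSet_reflection :
    NullMeasurableSet ((b 1 + b 2 - ·) ⁻¹' convexHull ℝ (range b)) μ :=
  ((convex_convexHull ℝ (range b)).affine_preimage
    (AffineMap.const ℝ E (b 1 + b 2) - AffineMap.id ℝ E)).nullMeasurableSet μ

lemma measureReal_parallelogram :
    μ.real (parallelogram b) =
      μ.real (convexHull ℝ (range b)) + μ.real (convexHull ℝ (range b)) := by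
  have hull_ne_top : μ (convexHull ℝ (range b)) ≠ ⊤ :=
    ((finite_range b).isCompact_convexHull ℝ).measure_ne_top
  have reflection_ne_top : μ ((b 1 + b 2 - ·) ⁻¹' convexHull ℝ (range b)) ≠ ⊤ :=
    ((Homeomorph.subLeft (b 1 + b 2)).isCompact_preimage.2
      ((finite_range b).isCompact_convexHull ℝ)).measure_ne_top
  rw [← measureReal_congr (union_reflection_ae_eq_parallelogram b μ),
    measureReal_union₀ (nullMeasurableSet_reflection b μ) (aedisjoint_convexHull_reflection b μ)
      hull_ne_top reflection_ne_top, measureReal_preimage_sub_left]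

lemma HasDensity.parallelogram {x : E} {a a' : ℝ}
    (h : HasDensity μ (convexHull ℝ (range b)) x a)
    (h' : HasDensity μ (convexHull ℝ (range b)) (b 1 + b 2 - x) a') :
    HasDensity μ (parallelogram b) x (a + a') := by
  rw [HasDensity, ← funext (ballFraction_preimage_sub_left (b 1 + b 2) _ x)] at h'
  rw [HasDensity, ← ballFraction_congr_ae (union_reflection_ae_eq_parallelogram b μ)]
  exact h.union h' (nullMeasurableSet_reflection b μ) (aedisjoint_convexHull_reflection b μ)

end Parallelogram

section Lattice

/-- `c2` as a homomorphism. -/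
noncomputable def c2AddHom : ℤ × ℤ →+ ℝ × ℝ :=
  (Int.castAddHom ℝ).prodMap (Int.castAddHom ℝ)

lemma c2_add (i j : ℤ × ℤ) : c2 (i + j) = c2 i + c2 j := map_add c2AddHom i j

lemma c2_sub (i j : ℤ × ℤ) : c2 (i - j) = c2 i - c2 j := map_sub c2AddHom i j

lemma c2_zsmul (m : ℤ) (i : ℤ × ℤ) : c2 (m • i) = (m : ℝ) • c2 i := by
  rw [Int.cast_smul_eq_zsmul]
  exact map_zsmul c2AddHom m i

lemma isometry_c2 : Isometry c2 :=
  Isometry.of_dist_eq fun i j => by simp [c2, Prod.dist_eq]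

lemma finite_setOf_exists_add_mem {A S : Set (ℝ × ℝ)} (hA : Bornology.IsBounded A)
    (hS : Bornology.IsBounded S) : {i : ℤ × ℤ | ∃ z ∈ S, c2 i + z ∈ A}.Finite := by
  refine (isometry_c2.antilipschitz.isBounded_preimage (hA.sub hS)).isCompact_closure
    |>.finite_of_discrete.subset fun i => ?_
  rintro ⟨z, hz, hiz⟩
  exact subset_closure (mem_sub.2 ⟨_, hiz, z, hz, add_sub_cancel_right _ _⟩)

/-- Lattice vectors act on the plane by translation. -/
noncomputable instance : AddAction (ℤ × ℤ) (ℝ × ℝ) :=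
  AddAction.compHom (ℝ × ℝ) c2AddHom

lemma lattice_vadd_eq (i : ℤ × ℤ) (x : ℝ × ℝ) : i +ᵥ x = c2 i + x := rfl

instance : MeasurableConstVAdd (ℤ × ℤ) (ℝ × ℝ) :=
  ⟨fun i => measurable_const_add (c2 i)⟩

instance : IsIsometricVAdd (ℤ × ℤ) (ℝ × ℝ) :=
  ⟨fun i => isometry_add_left (c2 i)⟩

instance : VAddInvariantMeasure (ℤ × ℤ) (ℝ × ℝ) volume :=
  ⟨fun i s _ => measure_preimage_add volume (c2 i) s⟩

lemma existsUnique_intCast_add_mem_Ico (x : ℝ) : ∃! m : ℤ, (m : ℝ) + x ∈ Ico (0 : ℝ) 1 := by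
  simpa [add_comm] using existsUnique_add_zsmul_mem_Ico one_pos x (0 : ℝ)

lemma isAddFundamentalDomain_unitSquare :
    IsAddFundamentalDomain (ℤ × ℤ) (Ico (0 : ℝ) 1 ×ˢ Ico (0 : ℝ) 1) volume := by
  refine .mk' (measurableSet_Ico.prod measurableSet_Ico).nullMeasurableSet fun x => ?_
  obtain ⟨m, hm, hm_unique⟩ := existsUnique_intCast_add_mem_Ico x.1
  obtain ⟨n, hn, hn_unique⟩ := existsUnique_intCast_add_mem_Ico x.2
  exact ⟨(m, n), ⟨hm, hn⟩, fun i hi => Prod.ext (hm_unique i.1 hi.1) (hn_unique i.2 hi.2)⟩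

section LatticeBasis

variable {b : AffineBasis (Fin 3) ℝ (ℝ × ℝ)} {v : Fin 3 → ℤ × ℤ}

lemma affineMap_c2_combination_add (f : ℝ × ℝ →ᵃ[ℝ] ℝ) (i j k : ℤ × ℤ) (m n : ℤ) (x : ℝ × ℝ) :
    f (c2 (m • (j - i) + n • (k - i)) + x) =
      m * (f (c2 j) - f (c2 i)) + n * (f (c2 k) - f (c2 i)) + f x := by
  rw [f.decomp]
  simp only [c2_add, c2_sub, c2_zsmul, Pi.add_apply, map_add, map_sub, map_smul, smul_eq_mul]
  ring

lemma isAddFundamentalDomain_parallelogram (hv : ∀ k, b k = c2 (v k)) :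
    IsAddFundamentalDomain (AddSubgroup.closure {v 1 - v 0, v 2 - v 0}) (parallelogram b)
      volume := by
  refine .mk' ((convex_parallelogram b).nullMeasurableSet volume) fun x => ?_
  obtain ⟨m, hm, hm_unique⟩ := existsUnique_intCast_add_mem_Ico (b.coord 1 x)
  obtain ⟨n, hn, hn_unique⟩ := existsUnique_intCast_add_mem_Ico (b.coord 2 x)
  have vadd_mem_iff (m n : ℤ) :
      c2 (m • (v 1 - v 0) + n • (v 2 - v 0)) + x ∈ parallelogram b ↔
        m + b.coord 1 x ∈ Ico (0 : ℝ) 1 ∧ n + b.coord 2 x ∈ Ico (0 : ℝ) 1 := by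
    change _ ∧ _ ↔ _
    simp only [affineMap_c2_combination_add, ← hv]
    simp
  refine ⟨⟨_, AddSubgroup.mem_closure_pair.2 ⟨m, n, rfl⟩⟩, (vadd_mem_iff m n).2 ⟨hm, hn⟩, ?_⟩
  rintro ⟨g, hg⟩ hgx
  obtain ⟨m', n', rfl⟩ := AddSubgroup.mem_closure_pair.1 hg
  obtain ⟨hm', hn'⟩ := (vadd_mem_iff m' n').1 hgx
  simp only [hm_unique m' hm', hn_unique n' hn']

end LatticeBasis

section LatticeSum

variable {Λ : AddSubgroup (ℤ × ℤ)} {P : Set (ℝ × ℝ)}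

lemma tsum_volume_inter_ball (hP : IsAddFundamentalDomain Λ P volume) (z : ℝ × ℝ) (ρ : ℝ) :
    ∑' i : ℤ × ℤ, volume (P ∩ ball (c2 i + z) ρ) = volume P * volume (ball z ρ) := by
  have volume_unitSquare : volume (Ico (0 : ℝ) 1 ×ˢ Ico (0 : ℝ) 1) = 1 := by
    simp [Measure.volume_eq_prod, Measure.prod_prod]
  have h := tsum_measure_inter_vadd_mul_measure hP isAddFundamentalDomain_unitSquare (ball z ρ)
  rw [volume_unitSquare, mul_one] at h
  simpa only [vadd_ball, lattice_vadd_eq] using h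

lemma hasSum_ballFraction (hP : IsAddFundamentalDomain Λ P volume) (hP_top : volume P ≠ ⊤)
    (z : ℝ × ℝ) {ρ : ℝ} (hρ : 0 < ρ) :
    HasSum (fun i : ℤ × ℤ => ballFraction volume P (c2 i + z) ρ) (volume.real P) := by
  have measureReal_ball (i : ℤ × ℤ) :
      volume.real (ball (c2 i + z) ρ) = volume.real (ball z ρ) := by
    rw [Measure.addHaar_real_ball_center, Measure.addHaar_real_ball_center volume z]
  have ball_ne_zero : (volume (ball z ρ)).toReal ≠ 0 :=
    (ENNReal.toReal_pos (measure_ball_pos volume z hρ).ne' measure_ball_lt_top.ne).ne'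
  have tsum_eq := tsum_volume_inter_ball hP z ρ
  have hasSum_volume := ENNReal.hasSum_toReal
    (tsum_eq.trans_ne (ENNReal.mul_ne_top hP_top measure_ball_lt_top.ne))
  rw [← ENNReal.tsum_toReal_eq fun i => measure_inter_ball_ne_top P _ ρ, tsum_eq,
    ENNReal.toReal_mul] at hasSum_volume
  simpa only [ballFraction, measureReal_ball, measureReal_def, mul_div_cancel_right₀ _ ball_ne_zero]
    using hasSum_volume.div_const (volume.real (ball z ρ))

lemma hasSum_dens (hP : IsAddFundamentalDomain Λ P volume) (hconv : Convex ℝ P)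
    (hbdd : Bornology.IsBounded P) (z : ℝ × ℝ) :
    HasSum (fun i : ℤ × ℤ => dens P (c2 i + z)) (volume.real P) := by
  let J : Finset (ℤ × ℤ) :=
    (finite_setOf_exists_add_mem hbdd (isBounded_ball (x := z) (r := 1))).toFinset
  have disjoint_ball {i : ℤ × ℤ} (hi : i ∉ J) : Disjoint P (ball (c2 i + z) 1) := by
    rw [← lattice_vadd_eq, ← vadd_ball]
    refine disjoint_right.2 ?_
    rintro _ ⟨w, hw, rfl⟩ hwP
    exact hi ((Finite.mem_toFinset _).2 ⟨w, hw, hwP⟩)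
  have sum_ballFraction {ρ : ℝ} (hρ : ρ ∈ Ioo (0 : ℝ) 1) :
      ∑ i ∈ J, ballFraction volume P (c2 i + z) ρ = volume.real P :=
    (hasSum_sum_of_ne_finset_zero fun i hi => ballFraction_eq_zero_of_disjoint
      ((disjoint_ball hi).mono_right (ball_subset_ball hρ.2.le))).unique
        (hasSum_ballFraction hP hbdd.measure_lt_top.ne z hρ.1)
  have tendsto_sum : Tendsto (fun ρ => ∑ i ∈ J, ballFraction volume P (c2 i + z) ρ) (𝓝[>] 0)
      (𝓝 (∑ i ∈ J, dens P (c2 i + z))) :=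
    tendsto_finsetSum J fun i _ => hasDensity_dens hconv (c2 i + z)
  have sum_dens : ∑ i ∈ J, dens P (c2 i + z) = volume.real P :=
    tendsto_nhds_unique tendsto_sum (tendsto_const_nhds.congr'
      (mem_of_superset (Ioo_mem_nhdsGT one_pos) fun ρ hρ => (sum_ballFraction hρ).symm))
  rw [← sum_dens]
  exact hasSum_sum_of_ne_finset_zero fun i hi =>
    (hasDensity_zero_of_disjoint_ball one_pos (disjoint_ball hi)).dens_eq

end LatticeSum

section BondDensity

variable {A P : Set (ℝ × ℝ)} {r : ℤ × ℤ}

/-- The density of `A` averaged over the bond `(i, i + r)`, i.e. `⨍_{(i,i+r)} χ_A db`, the bond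
being parametrised by `[0, 1]`. -/
noncomputable def bondDens (A : Set (ℝ × ℝ)) (r i : ℤ × ℤ) : ℝ :=
  ∫ l in (0 : ℝ)..1, dens A (c2 i + l • c2 r)

lemma exists_finset_dens_eq_zero (hA : Bornology.IsBounded A) (r : ℤ × ℤ) :
    ∃ J : Finset (ℤ × ℤ), ∀ i ∉ J, ∀ l ∈ Icc (0 : ℝ) 1, dens A (c2 i + l • c2 r) = 0 := by
  have bounded_bond : Bornology.IsBounded ((fun l : ℝ => l • c2 r) '' Icc 0 1) :=
    (isCompact_Icc.image (by fun_prop)).isBounded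
  refine ⟨(finite_setOf_exists_add_mem hA.closure bounded_bond).toFinset, fun i hi l hl =>
    dens_eq_zero_of_notMem_closure fun hmem => hi ?_⟩
  exact (Finite.mem_toFinset _).2 ⟨_, mem_image_of_mem _ hl, hmem⟩

lemma bondDens_eq_zero {i : ℤ × ℤ}
    (h : ∀ l ∈ Icc (0 : ℝ) 1, dens A (c2 i + l • c2 r) = 0) : bondDens A r i = 0 := by
  rw [bondDens, intervalIntegral.integral_congr (g := fun _ => (0 : ℝ)) fun l hl =>
    h l (by rwa [uIcc_of_le zero_le_one] at hl), intervalIntegral.integral_zero]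

lemma summable_bondDens (hA : Bornology.IsBounded A) (r : ℤ × ℤ) :
    Summable (bondDens A r) := by
  obtain ⟨J, hJ⟩ := exists_finset_dens_eq_zero hA r
  exact (hasSum_sum_of_ne_finset_zero fun i hi => bondDens_eq_zero (hJ i hi)).summable

lemma hasSum_bondDens {Λ : AddSubgroup (ℤ × ℤ)} (hP : IsAddFundamentalDomain Λ P volume)
    (hconv : Convex ℝ P) (hbdd : Bornology.IsBounded P) (r : ℤ × ℤ) :
    HasSum (bondDens P r) (volume.real P) := by
  obtain ⟨J, hJ⟩ := exists_finset_dens_eq_zero hbdd r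
  have sum_dens {l : ℝ} (hl : l ∈ Icc (0 : ℝ) 1) :
      ∑ i ∈ J, dens P (c2 i + l • c2 r) = volume.real P :=
    (hasSum_sum_of_ne_finset_zero fun i hi => hJ i hi l hl).unique
      (hasSum_dens hP hconv hbdd (l • c2 r))
  have sum_bondDens : ∑ i ∈ J, bondDens P r i = volume.real P := by
    unfold bondDens
    rw [← intervalIntegral.integral_finsetSum fun i _ => intervalIntegrable_dens hconv _ _ 0 1,
      intervalIntegral.integral_congr (g := fun _ => volume.real P) fun l hl =>
        sum_dens (by rwa [uIcc_of_le zero_le_one] at hl)]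
    simp
  rw [← sum_bondDens]
  exact hasSum_sum_of_ne_finset_zero fun i hi => bondDens_eq_zero (hJ i hi)

lemma integral_dens_sub_bond (m : ℤ × ℤ) (A : Set (ℝ × ℝ)) (r i : ℤ × ℤ) :
    ∫ l in (0 : ℝ)..1, dens A (c2 m - (c2 i + l • c2 r)) = bondDens A r (m - r - i) := by
  have reversed_bond (l : ℝ) : c2 m - (c2 i + l • c2 r) = c2 (m - r - i) + (1 - l) • c2 r := by
    rw [c2_sub, c2_sub]
    module
  simp only [reversed_bond]
  rw [intervalIntegral.integral_comp_sub_left fun l => dens A (c2 (m - r - i) + l • c2 r),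
    sub_self, sub_zero, bondDens]

lemma dens_parallelogram (b : AffineBasis (Fin 3) ℝ (ℝ × ℝ)) (x : ℝ × ℝ) :
    dens (parallelogram b) x =
      dens (convexHull ℝ (range b)) x + dens (convexHull ℝ (range b)) (b 1 + b 2 - x) :=
  (HasDensity.parallelogram b volume (hasDensity_dens (convex_convexHull ℝ _) x)
    (hasDensity_dens (convex_convexHull ℝ _) _)).dens_eq

lemma bondDens_parallelogram {b : AffineBasis (Fin 3) ℝ (ℝ × ℝ)} {v : Fin 3 → ℤ × ℤ}
    (hv : ∀ k, b k = c2 (v k)) (r i : ℤ × ℤ) :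
    bondDens (parallelogram b) r i = bondDens (convexHull ℝ (range b)) r i +
      bondDens (convexHull ℝ (range b)) r (v 1 + v 2 - r - i) := by
  have integrable_reflection : IntervalIntegrable
      (fun l : ℝ => dens (convexHull ℝ (range b)) (b 1 + b 2 - (c2 i + l • c2 r))) volume 0 1 := by
    refine (intervalIntegrable_dens (convex_convexHull ℝ (range b)) (b 1 + b 2 - c2 i) (-c2 r)
      0 1).congr fun l _ => ?_
    congr 1
    module
  rw [← integral_dens_sub_bond, c2_add, ← hv, ← hv]
  simp only [bondDens, dens_parallelogram]
  exact intervalIntegral.integral_add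
    (intervalIntegrable_dens (convex_convexHull ℝ (range b)) _ _ 0 1) integrable_reflection

lemma hasSum_bondDens_convexHull {b : AffineBasis (Fin 3) ℝ (ℝ × ℝ)} {v : Fin 3 → ℤ × ℤ}
    (hv : ∀ k, b k = c2 (v k)) (r : ℤ × ℤ) :
    HasSum (bondDens (convexHull ℝ (range b)) r) (volume.real (convexHull ℝ (range b))) := by
  have hasSum_tsum := (summable_bondDens
    ((finite_range b).isCompact_convexHull ℝ).isBounded r).hasSum
  have hasSum_add := hasSum_tsum.add
    ((Equiv.subLeft (v 1 + v 2 - r)).hasSum_iff.2 hasSum_tsum)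
  have area_eq := hasSum_add.unique
    ((funext (bondDens_parallelogram hv r)) ▸ (hasSum_bondDens
      (isAddFundamentalDomain_parallelogram hv) (convex_parallelogram b)
      (isBounded_parallelogram b) r))
  rw [measureReal_parallelogram b volume] at area_eq
  convert hasSum_tsum
  linarith

section Triangle

variable {T : (ℤ × ℤ) × (ℤ × ℤ) × (ℤ × ℤ)}

lemma convex_tri (T : (ℤ × ℤ) × (ℤ × ℤ) × (ℤ × ℤ)) : Convex ℝ (tri T) :=
  convex_convexHull ℝ _

lemma isCompact_tri (T : (ℤ × ℤ) × (ℤ × ℤ) × (ℤ × ℤ)) : IsCompact (tri T) :=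
  (toFinite _).isCompact_convexHull ℝ

lemma exists_affineBasis_of_affineIndependent
    (h : AffineIndependent ℝ ![c2 T.1, c2 T.2.1, c2 T.2.2]) :
    ∃ b : AffineBasis (Fin 3) ℝ (ℝ × ℝ),
      (∀ k, b k = c2 (![T.1, T.2.1, T.2.2] k)) ∧ convexHull ℝ (range b) = tri T := by
  refine ⟨⟨_, h, h.affineSpan_eq_top_iff_card_eq_finrank_add_one.2 (by simp)⟩, ?_, ?_⟩
  · change ∀ k, ![c2 T.1, c2 T.2.1, c2 T.2.2] k = _
    simp [Fin.forall_fin_succ]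
  · change convexHull ℝ (range ![c2 T.1, c2 T.2.1, c2 T.2.2]) = tri T
    rw [Matrix.range_cons, Matrix.range_cons, Matrix.range_cons, Matrix.range_empty, union_empty]
    rfl

lemma hasSum_bondDens_tri (h : AffineIndependent ℝ ![c2 T.1, c2 T.2.1, c2 T.2.2]) (r : ℤ × ℤ) :
    HasSum (bondDens (tri T) r) (volume.real (tri T)) := by
  obtain ⟨b, hb, hull_eq⟩ := exists_affineBasis_of_affineIndependent h
  rw [← hull_eq]
  exact hasSum_bondDens_convexHull hb r

lemma nonempty_interior_tri (h : AffineIndependent ℝ ![c2 T.1, c2 T.2.1, c2 T.2.2]) :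
    (interior (tri T)).Nonempty := by
  obtain ⟨b, -, hb⟩ := exists_affineBasis_of_affineIndependent h
  rw [← hb]
  exact ⟨_, b.centroid_mem_interior_convexHull⟩

end Triangle

end BondDensity

end Lattice

section DirectionalDerivative

variable {S : Set (ℝ × ℝ)} {y : ℝ × ℝ → ℝ × ℝ} {A : (ℝ × ℝ) →ₗ[ℝ] (ℝ × ℝ)} {c x : ℝ × ℝ}

lemma Dr_eq_of_eventually_mem {r : ℝ × ℝ} (hA : ∀ x ∈ S, y x = A x + c)
    (hS : ∀ᶠ s : ℝ in 𝓝 0, x + s • r ∈ S) : Dr r y x = A r := by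
  have hasDerivAt_affine : HasDerivAt (fun s : ℝ => A x + c + s • A r) (A r) 0 := by
    simpa using ((hasDerivAt_id (0 : ℝ)).smul_const (A r)).const_add (A x + c)
  refine (hasDerivAt_affine.congr_of_eventuallyEq ?_).hasDerivWithinAt.derivWithin
    (uniqueDiffWithinAt_Ioi 0)
  filter_upwards [hS] with s hs
  rw [hA _ hs, map_add, map_smul]
  abel

lemma Dr_eq_of_mem_interior (hA : ∀ x ∈ S, y x = A x + c) (hx : x ∈ interior S) (r : ℝ × ℝ) :
    Dr r y x = A r := by
  have tendsto_line : Tendsto (fun s : ℝ => x + s • r) (𝓝 0) (𝓝 x) :=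
    Continuous.tendsto' (by fun_prop) _ _ (by simp)
  exact Dr_eq_of_eventually_mem hA (tendsto_line.eventually_mem (mem_interior_iff_mem_nhds.1 hx))

lemma ae_Dr_eq_of_mem (hS : Convex ℝ S) (hA : ∀ x ∈ S, y x = A x + c) (p r : ℝ × ℝ) :
    ∀ᵐ l : ℝ, p + l • r ∈ S → Dr r y (p + l • r) = A r := by
  have convex_preimage : Convex ℝ ((fun l : ℝ => p + l • r) ⁻¹' S) :=
    (hS.translate_preimage_right p).linear_preimage (LinearMap.toSpanSingleton ℝ (ℝ × ℝ) r)
  filter_upwards [(interior_ae_eq_of_null_frontier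
    (convex_preimage.addHaar_frontier volume)).mem_iff] with l hl hlS
  refine Dr_eq_of_eventually_mem hA ?_
  have eventually_mem : ∀ᶠ s : ℝ in 𝓝 0, p + (l + s) • r ∈ S :=
    (Continuous.tendsto' (by fun_prop) 0 l (add_zero l)).eventually_mem
      (mem_interior_iff_mem_nhds.1 (hl.2 hlS))
  filter_upwards [eventually_mem] with s hs
  rwa [add_assoc, ← add_smul]

end DirectionalDerivative

section EffectiveArea

variable {𝒯 : Finset ((ℤ × ℤ) × (ℤ × ℤ) × (ℤ × ℤ))} {T : (ℤ × ℤ) × (ℤ × ℤ) × (ℤ × ℤ)}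

lemma ae_dens_mul_comp_Dr_eq
    (hnd : AffineIndependent ℝ ![c2 T.1, c2 T.2.1, c2 T.2.2]) {y : ℝ × ℝ → ℝ × ℝ}
    (haff : ∃ A : (ℝ × ℝ) →ₗ[ℝ] (ℝ × ℝ), ∃ c : ℝ × ℝ, ∀ x ∈ tri T, y x = A x + c)
    {r g : ℝ × ℝ} (hg : ∀ x ∈ interior (tri T), Dr r y x = g) (φ : ℝ × ℝ → ℝ) (p : ℝ × ℝ) :
    ∀ᵐ l : ℝ, dens (tri T) (p + l • r) * φ (Dr r y (p + l • r)) =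
      dens (tri T) (p + l • r) * φ g := by
  obtain ⟨A, c, hA⟩ := haff
  obtain ⟨x, hx⟩ := nonempty_interior_tri hnd
  have g_eq : g = A r := (hg x hx).symm.trans (Dr_eq_of_mem_interior hA hx r)
  filter_upwards [ae_Dr_eq_of_mem (convex_tri T) hA p r] with l hl
  by_cases hmem : p + l • r ∈ tri T
  · rw [hl hmem, g_eq]
  · rw [dens_eq_zero_of_notMem_closure ((isCompact_tri T).isClosed.closure_eq.symm ▸ hmem),
      zero_mul, zero_mul]

lemma integral_dens_biUnion_tri_mul_comp_Dr
    (hnd : ∀ T ∈ 𝒯, AffineIndependent ℝ ![c2 T.1, c2 T.2.1, c2 T.2.2])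
    (hdisj : ∀ T ∈ 𝒯, ∀ T' ∈ 𝒯, T ≠ T' → interior (tri T) ∩ interior (tri T') = ∅)
    {y : ℝ × ℝ → ℝ × ℝ}
    (haff : ∀ T ∈ 𝒯, ∃ A : (ℝ × ℝ) →ₗ[ℝ] (ℝ × ℝ), ∃ c : ℝ × ℝ, ∀ x ∈ tri T, y x = A x + c)
    {r : ℤ × ℤ} {g : (ℤ × ℤ) × (ℤ × ℤ) × (ℤ × ℤ) → ℝ × ℝ}
    (hg : ∀ T ∈ 𝒯, ∀ x ∈ interior (tri T), Dr (c2 r) y x = g T) (φ : ℝ × ℝ → ℝ) (i : ℤ × ℤ) :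
    ∫ l in (0 : ℝ)..1,
        dens (⋃ T ∈ 𝒯, tri T) (c2 i + l • c2 r) * φ (Dr (c2 r) y (c2 i + l • c2 r)) =
      ∑ T ∈ 𝒯, bondDens (tri T) r i * φ (g T) := by
  have ae_eq : ∀ᵐ l : ℝ, ∀ T ∈ 𝒯,
      dens (tri T) (c2 i + l • c2 r) * φ (Dr (c2 r) y (c2 i + l • c2 r)) =
        dens (tri T) (c2 i + l • c2 r) * φ (g T) :=
    (ae_ball_iff 𝒯.countable_toSet).2 fun T hT =>
      ae_dens_mul_comp_Dr_eq (hnd T hT) (haff T hT) (hg T hT) φ (c2 i)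
  calc _ = ∫ l in (0 : ℝ)..1, ∑ T ∈ 𝒯, dens (tri T) (c2 i + l • c2 r) * φ (g T) := by
        refine intervalIntegral.integral_congr_ae (ae_eq.mono fun l hl _ => ?_)
        rw [dens_biUnion 𝒯 (fun T _ => convex_tri T) fun T hT T' hT' hne =>
          disjoint_iff_inter_eq_empty.2 (hdisj T hT T' hT' hne), Finset.sum_mul]
        exact Finset.sum_congr rfl hl
    _ = ∑ T ∈ 𝒯, ∫ l in (0 : ℝ)..1, dens (tri T) (c2 i + l • c2 r) * φ (g T) :=
        intervalIntegral.integral_finsetSum fun T _ =>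
          (intervalIntegrable_dens (convex_tri T) _ _ _ _).mul_const _
    _ = ∑ T ∈ 𝒯, bondDens (tri T) r i * φ (g T) :=
        Finset.sum_congr rfl fun T _ => intervalIntegral.integral_mul_const _ _

lemma sum_bondDens_tri
    (hnd : AffineIndependent ℝ ![c2 T.1, c2 T.2.1, c2 T.2.2]) {r : ℤ × ℤ}
    {B : Finset ((ℤ × ℤ) × (ℤ × ℤ))}
    (hB : ∀ i, (segment ℝ (c2 i) (c2 (i + r)) ∩ tri T).Nonempty → (i, r) ∈ B) :
    ∑ p ∈ B with p.2 = r, bondDens (tri T) p.2 p.1 = volume.real (tri T) := by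
  have bondDens_eq_zero_of_notMem {i : ℤ × ℤ} (hi : (i, r) ∉ B) : bondDens (tri T) r i = 0 := by
    refine bondDens_eq_zero fun l hl => dens_eq_zero_of_notMem_closure fun hmem => hi (hB i ?_)
    refine ⟨c2 i + l • c2 r, ?_, (isCompact_tri T).isClosed.closure_eq ▸ hmem⟩
    rw [segment_eq_image']
    exact ⟨l, hl, by simp [c2_add]⟩
  have sum_eq : ∑ p ∈ B with p.2 = r, bondDens (tri T) p.2 p.1 =
      ∑ i ∈ B.preimage (fun i => (i, r)) (Prod.mk_left_injective r).injOn,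
        bondDens (tri T) r i := by
    rw [Finset.sum_preimage' _ _ _ fun p : (ℤ × ℤ) × (ℤ × ℤ) => bondDens (tri T) p.2 p.1]
    refine Finset.sum_congr (Finset.filter_congr fun p _ => ?_) fun _ _ => rfl
    grind
  rw [sum_eq]
  exact (hasSum_sum_of_ne_finset_zero fun i hi => bondDens_eq_zero_of_notMem
    fun hmem => hi (Finset.mem_preimage.2 hmem)).unique (hasSum_bondDens_tri hnd r)

theorem ecc_effective_area_2d_general
    (B : Finset ((ℤ × ℤ) × (ℤ × ℤ))) (K : (ℤ × ℤ) × (ℤ × ℤ) → Prop)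
    (R : Finset (ℤ × ℤ)) (hBR : ∀ p ∈ B, p.2 ∈ R)
    (𝒯 : Finset ((ℤ × ℤ) × (ℤ × ℤ) × (ℤ × ℤ)))
    (hnd : ∀ T ∈ 𝒯, AffineIndependent ℝ ![c2 T.1, c2 T.2.1, c2 T.2.2])
    (hdisj : ∀ T ∈ 𝒯, ∀ T' ∈ 𝒯, T ≠ T' → interior (tri T) ∩ interior (tri T') = ∅)
    (y : ℝ × ℝ → ℝ × ℝ)
    (haff : ∀ T ∈ 𝒯, ∃ A : (ℝ × ℝ) →ₗ[ℝ] (ℝ × ℝ), ∃ c : ℝ × ℝ, ∀ x ∈ tri T, y x = A x + c)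
    (φ : ℝ × ℝ → ℝ) (G : ((ℤ × ℤ) × (ℤ × ℤ) × (ℤ × ℤ)) → (ℤ × ℤ) → ℝ × ℝ)
    (hG : ∀ T ∈ 𝒯, ∀ r ∈ R, ∀ x ∈ interior (tri T), Dr (c2 r) y x = G T r)
    (hB : ∀ r ∈ R, ∀ i : ℤ × ℤ,
      (segment ℝ (c2 i) (c2 (i + r)) ∩ ⋃ T ∈ 𝒯, tri T).Nonempty → (i, r) ∈ B) :
    ∑ p ∈ B with K p, ∫ l in (0 : ℝ)..1, dens (⋃ T ∈ 𝒯, tri T) (c2 p.1 + l • c2 p.2) *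
        φ (Dr (c2 p.2) y (c2 p.1 + l • c2 p.2)) =
      ∑ T ∈ 𝒯, ∑ r ∈ R, (volume.real (tri T) -
        ∑ p ∈ B with p.2 = r ∧ ¬ K p, bondDens (tri T) p.2 p.1) * φ (G T r) := by
  have effective_area {T} (hT : T ∈ 𝒯) {r} (hr : r ∈ R) :
      volume.real (tri T) - ∑ p ∈ B with p.2 = r ∧ ¬ K p, bondDens (tri T) p.2 p.1 =
        ∑ p ∈ B with K p ∧ p.2 = r, bondDens (tri T) p.2 p.1 := by
    rw [← sum_bondDens_tri (hnd T hT) fun i hi =>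
        hB r hr i (hi.mono (inter_subset_inter_right _ (subset_biUnion_of_mem hT))),
      ← Finset.sum_filter_add_sum_filter_not _ K, Finset.filter_filter, Finset.filter_filter,
      add_sub_cancel_right]
    simp only [and_comm]
  calc _ = ∑ p ∈ B with K p, ∑ T ∈ 𝒯, bondDens (tri T) p.2 p.1 * φ (G T p.2) :=
        Finset.sum_congr rfl fun p hp => integral_dens_biUnion_tri_mul_comp_Dr hnd hdisj haff
          (fun T hT => hG T hT p.2 (hBR p (Finset.mem_filter.1 hp).1)) φ p.1
    _ = ∑ T ∈ 𝒯, ∑ r ∈ R, ∑ p ∈ B with K p ∧ p.2 = r,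
          bondDens (tri T) p.2 p.1 * φ (G T p.2) := by
        rw [Finset.sum_comm]
        refine Finset.sum_congr rfl fun T _ => ?_
        simp only [← Finset.filter_filter]
        exact (Finset.sum_fiberwise_of_maps_to
          (fun p hp => hBR p (Finset.mem_filter.1 hp).1) _).symm
    _ = _ := by
        refine Finset.sum_congr rfl fun T hT => Finset.sum_congr rfl fun r hr => ?_
        rw [effective_area hT hr, Finset.sum_mul]
        exact Finset.sum_congr rfl fun p hp => by rw [(Finset.mem_filter.1 hp).2.2]

end EffectiveArea

end

/-- Effective-area form of the 2D ECC method: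
`∑_{b∈B, b⊂Ω_c} c_b(y) = ∑_{T∈𝒯} ∑_{r∈R} Ω_{T,r} φ(D_r y|_T)` with
`Ω_{T,r} = |T| − ∑_{(i,i+r)∈B, (i,i+r)⊄Ω_c} ⨍_{(i,i+r)} χ_T db`; consequently
`E^ecc(y) = ∑_{b∈B, b⊄Ω_c} e_b(y) + ∑_{T∈𝒯} ∑_{r∈R} Ω_{T,r} φ(D_r y|_T)`.
Here `G T r` denotes the (constant) value of `D_r y` on the triangle `T`. -/
theorem ecc_effective_area_2d
    (I : Finset (ℤ × ℤ)) (R : Finset (ℤ × ℤ)) (hR0 : (0 : ℤ × ℤ) ∉ R)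
    (𝒯 : Finset ((ℤ × ℤ) × (ℤ × ℤ) × (ℤ × ℤ)))
    (Ωc : Set (ℝ × ℝ)) (hΩc : Ωc = ⋃ T ∈ 𝒯, tri T)
    (hnd : ∀ T ∈ 𝒯, AffineIndependent ℝ ![c2 T.1, c2 T.2.1, c2 T.2.2])
    (hdisj : ∀ T ∈ 𝒯, ∀ T' ∈ 𝒯, T ≠ T' → interior (tri T) ∩ interior (tri T') = ∅)
    (y : ℝ × ℝ → ℝ × ℝ) (hy : Continuous y)
    (haff : ∀ T ∈ 𝒯, ∃ A : (ℝ × ℝ) →ₗ[ℝ] (ℝ × ℝ), ∃ c : ℝ × ℝ, ∀ x ∈ tri T, y x = A x + c)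
    (φ : ℝ × ℝ → ℝ) (hφ : Continuous φ)
    (G : ((ℤ × ℤ) × (ℤ × ℤ) × (ℤ × ℤ)) → (ℤ × ℤ) → ℝ × ℝ)
    (hG : ∀ T ∈ 𝒯, ∀ r ∈ R, ∀ x ∈ interior (tri T), Dr (c2 r) y x = G T r)
    (hbonds : ∀ r ∈ R, ∀ i : ℤ × ℤ,
      (segment ℝ (c2 i) (c2 (i + r)) ∩ closure Ωc).Nonempty → i ∈ I ∧ i + r ∈ I) :
    (∑ p ∈ ((I ×ˢ R).filter (fun p => p.1 + p.2 ∈ I)).filter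
        (fun p => openSegment ℝ (c2 p.1) (c2 (p.1 + p.2)) ⊆ Ωc),
        ∫ l in (0:ℝ)..1,
          dens Ωc (c2 p.1 + l • c2 p.2) * φ (Dr (c2 p.2) y (c2 p.1 + l • c2 p.2)))
      = (∑ T ∈ 𝒯, ∑ r ∈ R,
          ((volume (tri T)).toReal
            - ∑ p ∈ ((I ×ˢ R).filter (fun p => p.1 + p.2 ∈ I)).filter
                (fun p => p.2 = r ∧ ¬ openSegment ℝ (c2 p.1) (c2 (p.1 + p.2)) ⊆ Ωc),
                ∫ l in (0:ℝ)..1, dens (tri T) (c2 p.1 + l • c2 p.2))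
            * φ (G T r))
    ∧ (∑ p ∈ ((I ×ˢ R).filter (fun p => p.1 + p.2 ∈ I)).filter
          (fun p => ¬ openSegment ℝ (c2 p.1) (c2 (p.1 + p.2)) ⊆ Ωc),
          φ (y (c2 (p.1 + p.2)) - y (c2 p.1)))
        + (∑ T ∈ 𝒯, ∑ r ∈ R,
            ((volume (tri T)).toReal
              - ∑ p ∈ ((I ×ˢ R).filter (fun p => p.1 + p.2 ∈ I)).filter
                  (fun p => p.2 = r ∧ ¬ openSegment ℝ (c2 p.1) (c2 (p.1 + p.2)) ⊆ Ωc),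
                  ∫ l in (0:ℝ)..1, dens (tri T) (c2 p.1 + l • c2 p.2))
              * φ (G T r))
      = (∑ p ∈ ((I ×ˢ R).filter (fun p => p.1 + p.2 ∈ I)).filter
            (fun p => ¬ openSegment ℝ (c2 p.1) (c2 (p.1 + p.2)) ⊆ Ωc),
            φ (y (c2 (p.1 + p.2)) - y (c2 p.1)))
        + (∑ p ∈ ((I ×ˢ R).filter (fun p => p.1 + p.2 ∈ I)).filter
            (fun p => openSegment ℝ (c2 p.1) (c2 (p.1 + p.2)) ⊆ Ωc),
            ∫ l in (0:ℝ)..1,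
              dens Ωc (c2 p.1 + l • c2 p.2) * φ (Dr (c2 p.2) y (c2 p.1 + l • c2 p.2))) := by
  have effective_area := ecc_effective_area_2d_general
    ((I ×ˢ R).filter fun p => p.1 + p.2 ∈ I)
    (fun p => openSegment ℝ (c2 p.1) (c2 (p.1 + p.2)) ⊆ Ωc) R
    (fun p hp => (Finset.mem_product.1 (Finset.mem_filter.1 hp).1).2) 𝒯 hnd hdisj y haff φ G hG ?_
  · rw [← hΩc] at effective_area
    exact ⟨effective_area, congrArg _ effective_area.symm⟩
  · intro r hr i hi
    obtain ⟨hiI, hirI⟩ := hbonds r hr i (hi.mono (Set.inter_subset_inter_right _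
      (hΩc ▸ subset_closure)))
    exact Finset.mem_filter.2 ⟨Finset.mem_product.2 ⟨hiI, hr⟩, hirI⟩
end
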